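/- arXiv:2205.03581 — 5 statements merged into one kernel-verified Lean document; each statement's English description precedes it below -/
import Mathlib

section
/- Let A be a complex unital Banach algebra and a, b, c, d ∈ A satisfying acd = dbd and dba = aca. Then the ag-Drazin spectra of ac and bd coincide: σ_ad(ac) = σ_ad(bd). -/
open Filter Topology

/-- An element of a complex Banach algebra is quasinilpotent if its spectrum is `{0}`. -/
def IsQuasinilpotent {A : Type*} [NormedRing A] [NormedAlgebra ℂ A] (b : A) : Prop :=
  spectrum ℂ b = {0}

/-- `a` is generalized Drazin invertible. -/
def IsGDrazinInv {A : Type*} [NormedRing A] [NormedAlgebra ℂ A] (a : A) : Prop :=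
  ∃ x : A, a * x = x * a ∧ x * a * x = x ∧ IsQuasinilpotent (a - a ^ 2 * x)

/-- `a ∈ A^acc`: `a - λ1` is generalized Drazin invertible for all nonzero `λ`. -/
def MemAcc {A : Type*} [NormedRing A] [NormedAlgebra ℂ A] (a : A) : Prop :=
  ∀ l : ℂ, l ≠ 0 → IsGDrazinInv (a - l • (1 : A))

/-- `x` is an ag-Drazin inverse of `a`. -/
def IsAgDrazinInverseOf {A : Type*} [NormedRing A] [NormedAlgebra ℂ A] (x a : A) : Prop :=
  a * x = x * a ∧ x * a * x = x ∧ MemAcc (a - a ^ 2 * x)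

/-- `a` is ag-Drazin invertible. -/
def IsAgDrazinInv {A : Type*} [NormedRing A] [NormedAlgebra ℂ A] (a : A) : Prop :=
  ∃ x : A, IsAgDrazinInverseOf x a

/-- The generalized Drazin spectrum. -/
def gDrazinSpectrum {A : Type*} [NormedRing A] [NormedAlgebra ℂ A] (a : A) : Set ℂ :=
  {l : ℂ | ¬ IsGDrazinInv (a - l • (1 : A))}

/-- The ag-Drazin spectrum. -/
def agDrazinSpectrum {A : Type*} [NormedRing A] [NormedAlgebra ℂ A] (a : A) : Set ℂ :=
  {l : ℂ | ¬ IsAgDrazinInv (a - l • (1 : A))}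

structure ShiftEq {A : Type*} [Ring A] (P Q X Y : A) : Prop where
  py : P * Y = Y * Q
  qx : Q * X = X * P
  yx : Y * X = P * P
  xy : X * Y = Q * Q

theorem ShiftEq.symm' {A : Type*} [Ring A] {P Q X Y : A} (h : ShiftEq P Q X Y) :
    ShiftEq Q P Y X := ⟨h.qx, h.py, h.xy, h.yx⟩

theorem shiftEq_lag_one {A : Type*} [Ring A] (V W : A) :
    ShiftEq (V * W) (W * V) (W * V * W) V := by
  constructor <;> noncomm_ring

theorem shiftEq_cut {A : Type*} [Ring A] {P Q X Y e r : A} (h : ShiftEq P Q X Y)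
    (ee : e * e = e) (cPe : P * e = e * P) (cQr : Q * r = r * Q)
    (rX : r * X = X * e) (Yr : Y * r = e * Y) :
    ShiftEq (P * e) (Q * r) (X * e) (e * Y) := by
  obtain ⟨py, qx, yx, xy⟩ := h
  constructor
  · calc P * e * (e * Y) = e * P * (e * Y) := by rw [cPe]
      _ = e * P * (Y * r) := by rw [Yr]
      _ = e * (P * Y) * r := by noncomm_ring
      _ = _ := by rw [py]; noncomm_ring
  · calc Q * r * (X * e) = Q * (r * X) * e := by noncomm_ring
      _ = (Q * X) * (e * e) := by rw [rX]; noncomm_ring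
      _ = X * (P * e) := by rw [ee, qx]; noncomm_ring
      _ = X * ((e * e) * P) := by rw [cPe, ee]
      _ = X * e * (e * P) := by noncomm_ring
      _ = _ := by rw [← cPe]
  · calc e * Y * (X * e) = e * (Y * X) * e := by noncomm_ring
      _ = (e * P) * (P * e) := by rw [yx]; noncomm_ring
      _ = _ := by rw [← cPe]
  · calc X * e * (e * Y) = (X * e) * (Y * r) := by rw [Yr]
      _ = r * (X * Y) * r := by rw [← rX]; noncomm_ring
      _ = (r * Q) * (Q * r) := by rw [xy]; noncomm_ring
      _ = _ := by rw [← cQr]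

theorem inv_commute {A : Type*} [Ring A] {m z c : A} (h1 : m * z = 1) (h2 : z * m = 1)
    (hc : Commute m c) : Commute z c := by
  have : z * c = c * z := by
    calc z * c = z * c * (m * z) := by rw [h1, mul_one]
      _ = z * (c * m) * z := by noncomm_ring
      _ = z * (m * c) * z := by rw [hc.eq]
      _ = (z * m) * c * z := by noncomm_ring
      _ = c * z := by rw [h2, one_mul]
  exact this

theorem isUnit_of_two {A : Type*} [Ring A] {m z : A} (h1 : m * z = 1) (h2 : z * m = 1) :
    IsUnit m := ⟨⟨m, z, h1, h2⟩, rfl⟩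

theorem exists_two {A : Type*} [Ring A] {m : A} (h : IsUnit m) :
    ∃ z, m * z = 1 ∧ z * m = 1 := by
  obtain ⟨u, rfl⟩ := h
  exact ⟨↑u⁻¹, by simp, by simp⟩

theorem commute_smul_one {A : Type*} [Ring A] [Algebra ℂ A] (l : ℂ) (a : A) :
    Commute a (l • (1 : A)) := (Commute.one_right a).smul_right l

theorem shiftEq_unit {A : Type*} [Ring A] [Algebra ℂ A] {P Q X Y : A}
    (h : ShiftEq P Q X Y) {l : ℂ} (hl : l ≠ 0) (hu : IsUnit (P - l • (1 : A))) :
    IsUnit (Q - l • (1 : A)) := by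
  obtain ⟨v, h1, h2⟩ := exists_two hu
  have e1 : (Q - l • (1 : A)) * (X * v * Y) = Q * Q := by
    have : (Q - l • (1 : A)) * X = X * (P - l • (1 : A)) := by
      simp [sub_mul, mul_sub, h.qx]
    rw [← mul_assoc, ← mul_assoc, this, mul_assoc X, h1, mul_one, h.xy]
  have e2 : (X * v * Y) * (Q - l • (1 : A)) = Q * Q := by
    have : Y * (Q - l • (1 : A)) = (P - l • (1 : A)) * Y := by
      simp [sub_mul, mul_sub, h.py]
    rw [mul_assoc, this, ← mul_assoc, mul_assoc X, h2, mul_one, h.xy]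
  apply isUnit_of_two (z := (-l⁻¹) • (1 : A) - (l⁻¹ * l⁻¹) • Q + (l⁻¹ * l⁻¹) • (X * v * Y))
  · rw [mul_add, mul_smul_comm _ _ (X * v * Y), e1]
    simp only [mul_sub, sub_mul, smul_mul_assoc, mul_smul_comm, one_mul, mul_one]
    match_scalars <;> field_simp <;> ring
  · rw [add_mul, smul_mul_assoc _ (X * v * Y), e2]
    simp only [mul_sub, sub_mul, smul_mul_assoc, mul_smul_comm, one_mul, mul_one]
    match_scalars <;> field_simp <;> ring

theorem qn_iff {A : Type*} [NormedRing A] [NormedAlgebra ℂ A] [CompleteSpace A] [Nontrivial A]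
    (n : A) : IsQuasinilpotent n ↔ ∀ l : ℂ, l ≠ 0 → IsUnit (n - l • (1 : A)) := by
  have key : ∀ l : ℂ, l ∈ spectrum ℂ n ↔ ¬ IsUnit (n - l • (1 : A)) := by
    intro l
    rw [spectrum.mem_iff, IsUnit.sub_iff, Algebra.algebraMap_eq_smul_one]
  unfold IsQuasinilpotent
  constructor
  · intro h l hl
    by_contra hc
    have := (key l).2 hc
    rw [h] at this
    exact hl this
  · intro h
    have hs : spectrum ℂ n ⊆ {0} := by
      intro l hl
      by_contra hc
      exact (key l).1 hl (h l hc)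
    exact (spectrum.nonempty n).subset_singleton_iff.1 hs

theorem qn_shift {A : Type*} [NormedRing A] [NormedAlgebra ℂ A] [CompleteSpace A] [Nontrivial A]
    {P Q X Y : A} (h : ShiftEq P Q X Y) (hP : IsQuasinilpotent P) : IsQuasinilpotent Q := by
  rw [qn_iff] at *
  exact fun l hl => shiftEq_unit h hl (hP l hl)

theorem qn_mul_idem {A : Type*} [NormedRing A] [NormedAlgebra ℂ A] [CompleteSpace A]
    [Nontrivial A] {n f : A} (hn : IsQuasinilpotent n) (hf : f * f = f) (hc : Commute n f) :
    IsQuasinilpotent (n * f) := by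
  rw [qn_iff] at *
  intro l hl
  obtain ⟨v, h1, h2⟩ := exists_two (hn l hl)
  have cv : Commute v f := inv_commute h1 h2 (hc.sub_left (commute_smul_one l f).symm)
  have e1 : (n * f - l • (1 : A)) * f = (n - l • (1 : A)) * f := by
    simp [sub_mul, mul_assoc, hf]
  have e2 : f * (n * f - l • (1 : A)) = f * (n - l • (1 : A)) := by
    simp only [mul_sub]
    rw [← mul_assoc, ← hc.eq, mul_assoc, hf]
  apply isUnit_of_two (z := f * v + (-l⁻¹) • (1 - f))
  · rw [mul_add, ← mul_assoc, e1, mul_assoc, ← cv.eq, ← mul_assoc, h1]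
    simp only [mul_sub, sub_mul, smul_mul_assoc, mul_smul_comm, one_mul, mul_one, mul_assoc, hf]
    match_scalars <;> field_simp <;> ring
  · rw [add_mul, ← cv.eq, mul_assoc, e2, hc.symm.sub_right (commute_smul_one l f) |>.eq,
      ← mul_assoc, h2]
    have : f * (n * f) = n * f := by rw [← mul_assoc, ← hc.eq, mul_assoc, hf]
    simp only [mul_sub, sub_mul, smul_mul_assoc, mul_smul_comm, one_mul, mul_one, this]
    match_scalars <;> field_simp <;> ring

/-- A quasinilpotent element absorbs. -/
theorem qn_absorb {A : Type*} [NormedRing A] [NormedAlgebra ℂ A] [CompleteSpace A]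
    {n : A} (hn : IsQuasinilpotent n) (K : ℝ) : 
    ∃ k : ℕ, ‖n ^ k‖ * K ^ k ≤ 1 / 2 := by
  have hr : spectralRadius ℂ n = 0 := by
    unfold IsQuasinilpotent at hn
    simp [spectralRadius, hn]
  have ht := spectrum.pow_norm_pow_one_div_tendsto_nhds_spectralRadius n
  rw [hr] at ht
  have hpos : (0 : ENNReal) < ENNReal.ofReal (1 / (2 * (|K| + 1))) := by
    rw [ENNReal.ofReal_pos]; positivity
  obtain ⟨k, hk, hk1⟩ := ((ht.eventually (gt_mem_nhds hpos)).and (eventually_ge_atTop 1)).exists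
  rw [ENNReal.ofReal_lt_ofReal_iff (by positivity)] at hk
  refine ⟨k, ?_⟩
  have hk0 : (k : ℝ) ≠ 0 := by positivity
  have h1 : ‖n ^ k‖ ≤ (1 / (2 * (|K| + 1))) ^ k := by
    have := pow_le_pow_left₀ (by positivity) hk.le k
    rwa [← Real.rpow_natCast (‖n ^ k‖ ^ (1 / (k : ℝ))), ← Real.rpow_mul (norm_nonneg _),
      one_div_mul_cancel hk0, Real.rpow_one] at this
  calc ‖n ^ k‖ * K ^ k ≤ ‖n ^ k‖ * |K| ^ k := by
        refine mul_le_mul_of_nonneg_left ?_ (norm_nonneg _)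
        rw [← abs_pow]; exact le_abs_self _
    _ ≤ (1 / (2 * (|K| + 1))) ^ k * |K| ^ k := by gcongr
    _ = ((1 / (2 * (|K| + 1))) * |K|) ^ k := by rw [mul_pow]
    _ ≤ (1 / 2) ^ k := by
        gcongr
        have : 0 ≤ |K| := abs_nonneg K
        rw [one_div_mul_eq_div, div_le_div_iff₀ (by positivity) (by positivity)]
        linarith
    _ ≤ (1 / 2) ^ 1 := pow_le_pow_of_le_one (by norm_num) (by norm_num) hk1
    _ = 1 / 2 := by norm_num

theorem absorb_left {A : Type*} [NormedRing A] [NormedAlgebra ℂ A] [CompleteSpace A]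
    {n u x : A} (hn : IsQuasinilpotent n) (h : u = n * u * x) : u = 0 := by
  have hk : ∀ k : ℕ, u = n ^ k * u * x ^ k := by
    intro k
    induction k with
    | zero => simp
    | succ k ih =>
      calc u = n ^ k * u * x ^ k := ih
        _ = n ^ k * (n * u * x) * x ^ k := by rw [← h]
        _ = n ^ (k + 1) * u * x ^ (k + 1) := by rw [pow_succ n, pow_succ' x]; noncomm_ring
  obtain ⟨k, hb⟩ := qn_absorb hn (max ‖x‖ 1)
  obtain hb' : ‖u‖ ≤ ‖u‖ * (1 / 2) := by
    by_cases h0 : k = 0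
    · subst h0
      by_contra
      have : ‖(1 : A)‖ ≤ 1 / 2 := by simpa using hb
      have h2 : ‖(1 : A)‖ ≤ ‖(1 : A)‖ * ‖(1 : A)‖ := by simpa using norm_mul_le (1 : A) 1
      have h3 : ‖(1 : A)‖ = 0 := by nlinarith [norm_nonneg (1 : A)]
      have h4 : u = 0 := by rw [← mul_one u, norm_eq_zero.1 h3, mul_zero]
      simp_all
    · calc ‖u‖ = ‖n ^ k * u * x ^ k‖ := by rw [← hk k]
        _ ≤ ‖n ^ k‖ * ‖u‖ * ‖x ^ k‖ := norm_mul₃_le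
        _ ≤ ‖n ^ k‖ * ‖u‖ * (max ‖x‖ 1) ^ k := by
            gcongr
            calc ‖x ^ k‖ ≤ ‖x‖ ^ k := norm_pow_le' _ (Nat.pos_of_ne_zero h0)
              _ ≤ _ := by gcongr; exact le_max_left _ _
        _ = ‖u‖ * (‖n ^ k‖ * (max ‖x‖ 1) ^ k) := by ring
        _ ≤ ‖u‖ * (1 / 2) := by gcongr
  have := norm_nonneg u
  exact norm_eq_zero.1 (by linarith)

theorem absorb_right {A : Type*} [NormedRing A] [NormedAlgebra ℂ A] [CompleteSpace A]
    {n u x : A} (hn : IsQuasinilpotent n) (h : u = x * u * n) : u = 0 := by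
  have hk : ∀ k : ℕ, u = x ^ k * u * n ^ k := by
    intro k
    induction k with
    | zero => simp
    | succ k ih =>
      calc u = x ^ k * u * n ^ k := ih
        _ = x ^ k * (x * u * n) * n ^ k := by rw [← h]
        _ = x ^ (k + 1) * u * n ^ (k + 1) := by rw [pow_succ x, pow_succ' n]; noncomm_ring
  obtain ⟨k, hb⟩ := qn_absorb hn (max ‖x‖ 1)
  obtain hb' : ‖u‖ ≤ ‖u‖ * (1 / 2) := by
    by_cases h0 : k = 0
    · subst h0
      by_contra
      have : ‖(1 : A)‖ ≤ 1 / 2 := by simpa using hb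
      have h2 : ‖(1 : A)‖ ≤ ‖(1 : A)‖ * ‖(1 : A)‖ := by simpa using norm_mul_le (1 : A) 1
      have h3 : ‖(1 : A)‖ = 0 := by nlinarith [norm_nonneg (1 : A)]
      have h4 : u = 0 := by rw [← mul_one u, norm_eq_zero.1 h3, mul_zero]
      simp_all
    · calc ‖u‖ = ‖x ^ k * u * n ^ k‖ := by rw [← hk k]
        _ ≤ ‖x ^ k‖ * ‖u‖ * ‖n ^ k‖ := norm_mul₃_le
        _ ≤ (max ‖x‖ 1) ^ k * ‖u‖ * ‖n ^ k‖ := by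
            gcongr
            calc ‖x ^ k‖ ≤ ‖x‖ ^ k := norm_pow_le' _ (Nat.pos_of_ne_zero h0)
              _ ≤ _ := by gcongr; exact le_max_left _ _
        _ = ‖u‖ * (‖n ^ k‖ * (max ‖x‖ 1) ^ k) := by ring
        _ ≤ ‖u‖ * (1 / 2) := by gcongr
  have := norm_nonneg u
  exact norm_eq_zero.1 (by linarith)

theorem gd_double_commute {A : Type*} [NormedRing A] [NormedAlgebra ℂ A] [CompleteSpace A]
    {a x c : A} (h1 : a * x = x * a) (h2 : x * a * x = x) (hn : IsQuasinilpotent (a - a ^ 2 * x))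
    (hc : Commute a c) : Commute x c := by
  have hc' := hc.eq
  have e1 : (1 - a * x) * c * (a * x) = 0 := by
    apply absorb_left hn (x := x)
    calc (1 - a * x) * c * (a * x) = (1 - a * x) * c * a * (x * a * x) := by
          rw [h2]; noncomm_ring
      _ = (1 - a * x) * (c * a) * (x * a * x) := by noncomm_ring
      _ = (1 - a * x) * a * c * ((x * a) * x) := by rw [← hc']; noncomm_ring
      _ = (1 - a * x) * a * c * ((a * x) * x) := by rw [← h1]
      _ = (a - a * (x * a)) * c * ((a * x) * x) := by noncomm_ring
      _ = (a - a * (a * x)) * c * ((a * x) * x) := by rw [← h1]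
      _ = (a - a ^ 2 * x) * ((1 - a * x) * c * (a * x)) * x := by
          have : (a - a ^ 2 * x) * (1 - a * x) = a - a * (a * x) := by
            have h3 : a ^ 2 * x * (a * x) = a ^ 2 * x := by
              rw [mul_assoc, ← mul_assoc x, h2]
            have h4 : a * (a * x) = a ^ 2 * x := by noncomm_ring
            rw [mul_sub, mul_one, sub_mul, h3, h4]; simp
          rw [← mul_assoc (a - a ^ 2 * x), ← mul_assoc (a - a ^ 2 * x), this]
          noncomm_ring
  have e2 : (a * x) * c * (1 - a * x) = 0 := by
    apply absorb_right hn (x := x)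
    have hax : (1 - a * x) * (a - a ^ 2 * x) = a * (1 - a * x) := by
      have h3 : a * x * a = a ^ 2 * x := by rw [mul_assoc, ← h1]; noncomm_ring
      have h4 : a * x * (a ^ 2 * x) = a ^ 2 * x := by
        calc a * x * (a ^ 2 * x) = a * x * a * (a * x) := by noncomm_ring
          _ = a ^ 2 * (x * a * x) := by rw [h3]; noncomm_ring
          _ = _ := by rw [h2]
      rw [sub_mul, one_mul, mul_sub, h3, h4]; noncomm_ring
    symm
    calc x * (a * x * c * (1 - a * x)) * (a - a ^ 2 * x)
        = (x * a * x) * c * ((1 - a * x) * (a - a ^ 2 * x)) := by noncomm_ring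
      _ = x * (c * a) * (1 - a * x) := by rw [h2, hax]; noncomm_ring
      _ = (x * a) * c * (1 - a * x) := by rw [← hc']; noncomm_ring
      _ = _ := by rw [h1]
  have e3 : c * (a * x) = a * x * c * (a * x) := by
    rw [← sub_eq_zero, ← e1]; noncomm_ring
  have e4 : a * x * c = a * x * c * (a * x) := by
    rw [← sub_eq_zero, ← e2]; noncomm_ring
  have e5 : a * x * c = c * (a * x) := e4.trans e3.symm
  show x * c = c * x
  calc x * c = x * a * x * c := by rw [h2]
    _ = x * (a * x * c) := by noncomm_ring
    _ = x * (c * a) * x := by rw [e5]; noncomm_ring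
    _ = (x * a) * c * x := by rw [← hc']; noncomm_ring
    _ = (a * x * c) * x := by rw [h1]
    _ = c * (a * x) * x := by rw [e5]
    _ = c * (x * a * x) := by rw [h1]; noncomm_ring
    _ = c * x := by rw [h2]

theorem core {A : Type*} [Ring A] [Algebra ℂ A] {P Q X Y x w : A} {l : ℂ} (hl : l ≠ 0)
    (h : ShiftEq P Q X Y) (hx1 : (P - l • (1 : A)) * x = x * (P - l • (1 : A)))
    (hx2 : x * (P - l • (1 : A)) * x = x) (hw : P * w = w * P)
    (hw1 : P * w = 1 - (P - l • (1 : A)) * x) (hw2 : w * (P * w) = w) :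
    ∃ y : A, (Q - l • (1 : A)) * y = y * (Q - l • (1 : A)) ∧ y * (Q - l • (1 : A)) * y = y ∧
      ∃ V W : A, (P - l • (1 : A)) - (P - l • (1 : A)) ^ 2 * x = V * W ∧
        (Q - l • (1 : A)) - (Q - l • (1 : A)) ^ 2 * y = W * V := by
  obtain ⟨py, qx, yx, xy⟩ := h
  set p := P - l • (1 : A) with hp
  set q := Q - l • (1 : A) with hq
  have cPp : Commute P p := (Commute.refl P).sub_right (commute_smul_one l P)
  have cwP : Commute w P := hw.symm
  have cwp : Commute w p := cwP.sub_right (commute_smul_one l w)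
  have qX : q * X = X * p := by simp [hp, hq, sub_mul, mul_sub, qx]
  have pY : p * Y = Y * q := by simp [hp, hq, sub_mul, mul_sub, py]
  clear_value p q
  set e := P * w with he
  have cPe : Commute P e := (Commute.refl P).mul_right cwP.symm
  have cpe : Commute p e := cPp.symm.mul_right cwp.symm
  have cwe : Commute w e := cwP.mul_right (Commute.refl w)
  have ee : e * e = e := by
    nth_rewrite 1 [he]
    rw [mul_assoc, hw2]
  have ex : e * x = 0 := by
    rw [hw1, sub_mul, one_mul, hx1, hx2, sub_self]
  have xe : x * e = 0 := by
    rw [hw1, mul_sub, mul_one, ← mul_assoc, hx2, sub_self]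
  have PPww : P * P * (w * w) = e := by
    calc P * P * (w * w) = P * (P * w) * w := by noncomm_ring
      _ = P * (w * P) * w := by rw [cwP.eq]
      _ = e * e := by rw [he]; noncomm_ring
      _ = e := ee
  have wwPP : w * w * (P * P) = e := by
    rw [← PPww]
    exact ((cwP.mul_right cwP).mul_left (cwP.mul_right cwP)).eq
  have wwe : w * w * e = w * w := by rw [mul_assoc, hw2]
  set r := X * (w * w) * Y with hr
  have cQr : Commute Q r := by
    show Q * r = r * Q
    calc Q * r = (Q * X) * (w * w) * Y := by rw [hr]; noncomm_ring
      _ = X * (P * (w * w)) * Y := by rw [qx]; noncomm_ring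
      _ = X * (w * w * P) * Y := by rw [(cwP.mul_left cwP).eq]
      _ = X * (w * w) * (P * Y) := by noncomm_ring
      _ = r * Q := by rw [py, hr]; noncomm_ring
  have cqr : Commute q r := by
    rw [hq]; exact cQr.sub_left (commute_smul_one l r).symm
  have rX : r * X = X * e := by
    calc r * X = X * (w * w * (Y * X)) := by rw [hr]; noncomm_ring
      _ = _ := by rw [yx, wwPP]
  have Yr : Y * r = e * Y := by
    calc Y * r = (Y * X) * (w * w) * Y := by rw [hr]; noncomm_ring
      _ = _ := by rw [yx, PPww]
  have rr : r * r = r := by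
    calc r * r = (r * X) * (w * w) * Y := by nth_rewrite 2 [hr]; noncomm_ring
      _ = X * (e * (w * w)) * Y := by rw [rX]; noncomm_ring
      _ = r := by rw [← (cwe.mul_left cwe).eq, wwe]
  have ee' : (1 - e) * (1 - e) = 1 - e := by
    simp only [sub_mul, mul_sub, one_mul, mul_one, ee]; simp
  have rr' : (1 - r) * (1 - r) = 1 - r := by
    simp only [sub_mul, mul_sub, one_mul, mul_one, rr]; simp
  have rX' : (1 - r) * X = X * (1 - e) := by simp [sub_mul, mul_sub, rX]
  have Yr' : Y * (1 - r) = (1 - e) * Y := by simp [sub_mul, mul_sub, Yr]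
  have cPe' : P * (1 - e) = (1 - e) * P := ((Commute.one_right P).sub_right cPe).eq
  have cQr' : Q * (1 - r) = (1 - r) * Q := ((Commute.one_right Q).sub_right cQr).eq
  have hS : ShiftEq (P * (1 - e)) (Q * (1 - r)) (X * (1 - e)) ((1 - e) * Y) :=
    shiftEq_cut ⟨py, qx, yx, xy⟩ ee' cPe' cQr' rX' Yr'
  have px : p * x = 1 - e := by rw [hw1]; simp
  have p0 : P * (1 - e) - l • (1 : A) = p * (1 - e) - l • e := by
    rw [hp]; simp only [mul_sub, sub_mul, smul_mul_assoc, one_mul, mul_one]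
    module
  have hu : IsUnit (P * (1 - e) - l • (1 : A)) := by
    rw [p0]
    apply isUnit_of_two (z := x - l⁻¹ • e)
    · have t1 : p * (1 - e) * x = 1 - e := by
        rw [mul_assoc, sub_mul, one_mul, ex, sub_zero, px]
      have t2 : p * (1 - e) * e = 0 := by rw [mul_assoc, sub_mul, one_mul, ee]; simp
      simp only [sub_mul _ (l • e), mul_sub _ x, t1, mul_smul_comm, smul_mul_assoc, t2, ex, ee]
      simp [smul_smul, hl]
    · have t1 : x * (p * (1 - e)) = 1 - e := by
        rw [← mul_assoc, ← hx1, px, ee']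
      have t2 : e * (p * (1 - e)) = 0 := by
        rw [← mul_assoc, ← cpe.eq, mul_assoc, mul_sub, mul_one, ee]; simp
      simp only [mul_sub _ _ (l • e), sub_mul x, t1, mul_smul_comm, smul_mul_assoc, t2, xe, ee]
      simp [smul_smul, hl]
  obtain ⟨g, hg1, hg2⟩ := exists_two (shiftEq_unit hS hl hu)
  have cgq : Commute g q := by
    refine inv_commute hg1 hg2 ?_
    refine Commute.sub_left (Commute.mul_left ?_ ?_) (commute_smul_one l q).symm
    · rw [hq]; exact (Commute.refl Q).sub_right (commute_smul_one l Q)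
    · exact (Commute.one_left q).sub_left cqr.symm
  have cgr : Commute g (1 - r) := by
    refine inv_commute hg1 hg2 ?_
    refine Commute.sub_left (Commute.mul_left cQr' (Commute.refl _))
      (commute_smul_one l _).symm
  have cqr' : Commute q (1 - r) := (Commute.one_right q).sub_right cqr
  have q0 : q * (1 - r) = (Q * (1 - r) - l • (1 : A)) * (1 - r) := by
    rw [sub_mul, mul_assoc Q, rr', hq, sub_mul]
  have qy : q * ((1 - r) * g) = 1 - r := by
    rw [← mul_assoc, q0, mul_assoc, ← cgr.eq, ← mul_assoc, hg1, one_mul]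
  have cy : q * ((1 - r) * g) = ((1 - r) * g) * q := (cqr'.mul_right cgq.symm).eq
  refine ⟨(1 - r) * g, cy, ?_, Y, X * (p * (w * w)), ?_, ?_⟩
  · rw [← cy, qy, ← mul_assoc, rr']
  · calc p - p ^ 2 * x = p - p * (p * x) := by noncomm_ring
      _ = p * e := by rw [px]; noncomm_ring
      _ = p * (P * P) * (w * w) := by rw [← PPww]; noncomm_ring
      _ = (P * P) * p * (w * w) := by rw [(cPp.mul_left cPp).eq]
      _ = _ := by rw [← yx]; noncomm_ring
  · calc q - q ^ 2 * ((1 - r) * g) = q - q * (q * ((1 - r) * g)) := by noncomm_ring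
      _ = q * r := by rw [qy]; noncomm_ring
      _ = (q * X) * (w * w) * Y := by rw [hr]; noncomm_ring
      _ = _ := by rw [qX]; noncomm_ring

theorem idem_of {A : Type*} [Ring A] {p x : A} (h2 : x * p * x = x) :
    (1 - p * x) * (1 - p * x) = 1 - p * x := by
  have : p * x * (p * x) = p * x := by
    rw [mul_assoc, ← mul_assoc x, h2]
  simp only [sub_mul, mul_sub, one_mul, mul_one, this]; simp

theorem gd_shift {A : Type*} [NormedRing A] [NormedAlgebra ℂ A] [CompleteSpace A] [Nontrivial A]
    {P Q X Y : A} (h : ShiftEq P Q X Y) {l : ℂ} (hl : l ≠ 0)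
    (hP : IsGDrazinInv (P - l • (1 : A))) : IsGDrazinInv (Q - l • (1 : A)) := by
  obtain ⟨x, h1, h2, hn⟩ := hP
  set p := P - l • (1 : A) with hp
  have hPp : P = p + l • (1 : A) := by rw [hp]; simp
  obtain ⟨z, hz1, hz2⟩ := exists_two ((qn_iff _).1 hn (-l) (neg_ne_zero.2 hl))
  have cpx : Commute p x := h1
  have cpr : Commute (p - p ^ 2 * x - (-l) • (1 : A)) p :=
    ((Commute.refl p).sub_left (((Commute.refl p).pow_left 2).mul_left cpx.symm)).sub_left
      (commute_smul_one _ p).symm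
  have cxr : Commute (p - p ^ 2 * x - (-l) • (1 : A)) x :=
    (cpx.sub_left ((cpx.pow_left 2).mul_left (Commute.refl x))).sub_left
      (commute_smul_one _ x).symm
  have czp : Commute z p := inv_commute hz1 hz2 cpr
  have czx : Commute z x := inv_commute hz1 hz2 cxr
  have ee := idem_of h2
  set e := 1 - p * x with he
  have cze : Commute z e := (Commute.one_right z).sub_right (czp.mul_right czx)
  have cpe : Commute p e := (Commute.one_right p).sub_right ((Commute.refl p).mul_right cpx)
  have hm : P * e = (p - p ^ 2 * x - (-l) • (1 : A)) * e := by
    have : p - p ^ 2 * x = p * e := by rw [he]; noncomm_ring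
    rw [this, hPp, sub_mul, mul_assoc, ee, add_mul]; simp
  have Pw : P * (e * z) = e := by
    rw [← mul_assoc, hm, mul_assoc, ← cze.eq, ← mul_assoc, hz1, one_mul]
  have cPe : Commute P e := by rw [hPp]; exact cpe.add_left (commute_smul_one l e).symm
  have cPz : Commute P z := by rw [hPp]; exact czp.symm.add_left (commute_smul_one l z).symm
  obtain ⟨y, y1, y2, V, W, r1, r2⟩ := core (x := x) (w := e * z) hl h h1 h2
    (cPe.mul_right cPz).eq Pw (by rw [Pw, mul_assoc, cze.eq, ← mul_assoc, ee])
  refine ⟨y, y1, y2, ?_⟩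
  rw [r2]
  refine qn_shift (shiftEq_lag_one V W) ?_
  rw [← r1]; exact hn

theorem acc_shift {A : Type*} [NormedRing A] [NormedAlgebra ℂ A] [CompleteSpace A] [Nontrivial A]
    {P Q X Y : A} (h : ShiftEq P Q X Y) (hP : MemAcc P) : MemAcc Q :=
  fun l hl => gd_shift h hl (hP l hl)

theorem acc_mul_idem {A : Type*} [NormedRing A] [NormedAlgebra ℂ A] [CompleteSpace A]
    [Nontrivial A] {n f : A} (hn : MemAcc n) (hf : f * f = f) (hc : Commute n f) :
    MemAcc (n * f) := by
  intro l hl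
  obtain ⟨t, h1, h2, h3⟩ := hn l hl
  have hcl : Commute (n - l • (1 : A)) f := hc.sub_left (commute_smul_one l f).symm
  have ct : Commute t f := gd_double_commute h1 h2 h3 hcl
  set k := n - l • (1 : A) with hk
  have e0 : n * f - l • (1 : A) = k * f - l • (1 - f) := by
    rw [hk]; simp only [sub_mul, smul_sub, smul_mul_assoc, one_mul]; abel
  have ff : f * (1 - f) = 0 := by rw [mul_sub, mul_one, hf, sub_self]
  have ff' : (1 - f) * f = 0 := by rw [sub_mul, one_mul, hf, sub_self]
  have f1 : (1 - f) * (1 - f) = 1 - f := by rw [mul_sub, mul_one, ff', sub_zero]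
  have mulrule : ∀ a b : A, Commute b f → ∀ α β : ℂ,
      (a * f + α • (1 - f)) * (b * f + β • (1 - f)) = a * b * f + (α * β) • (1 - f) := by
    intro a b hb α β
    have g1 : a * f * (b * f) = a * b * f := by
      rw [mul_assoc, ← mul_assoc f, ← hb.eq, mul_assoc b, hf, mul_assoc]
    have g2 : a * f * (1 - f) = 0 := by rw [mul_assoc, ff, mul_zero]
    have g3 : (1 - f) * (b * f) = 0 := by rw [hb.eq, ← mul_assoc, ff', zero_mul]
    rw [add_mul, mul_add, mul_add]
    simp only [smul_mul_assoc, mul_smul_comm, g1, g2, g3, f1, smul_zero, smul_smul]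
    simp [mul_comm]
  clear_value k
  have e0' : n * f - l • (1 : A) = k * f + (-l) • (1 - f) := by rw [e0]; module
  rw [e0']
  refine ⟨t * f + (-l⁻¹) • (1 - f), ?_, ?_, ?_⟩
  · rw [mulrule _ _ ct, mulrule _ _ hcl, h1, mul_comm (-l)]
  · rw [mulrule _ _ hcl, mulrule _ _ ct, h2]
    congr 2; field_simp
  · rw [pow_two, mulrule _ _ hcl, mulrule _ _ ct]
    have : k * f + -l • (1 - f) - (k * k * t * f + (-l * -l * -l⁻¹) • (1 - f))
        = (k - k ^ 2 * t) * f := by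
      have : -l * -l * -l⁻¹ = -l := by field_simp
      rw [this, pow_two, sub_mul]; abel
    rw [this]
    exact qn_mul_idem h3 hf (hcl.sub_left ((hcl.pow_left 2).mul_left ct))

theorem ag_shift_zero {A : Type*} [NormedRing A] [NormedAlgebra ℂ A] [CompleteSpace A]
    [Nontrivial A] {P Q X Y : A} (h : ShiftEq P Q X Y)
    (hP : IsAgDrazinInv P) : IsAgDrazinInv Q := by
  obtain ⟨x, h1, h2, h3⟩ := hP
  obtain ⟨py, qx, yx, xy⟩ := h
  have cPx : Commute P x := h1
  have xxP : x * x * P = x := by rw [mul_assoc, ← h1, ← mul_assoc, h2]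
  have cy : Q * (X * (x * x * x) * Y) = X * (x * x) * Y := by
    calc Q * (X * (x * x * x) * Y) = (Q * X) * (x * x * x) * Y := by noncomm_ring
      _ = X * (P * (x * x * x)) * Y := by rw [qx]; noncomm_ring
      _ = X * (x * (x * x * P)) * Y := by
        rw [((cPx.mul_right cPx).mul_right cPx).eq]; noncomm_ring
      _ = _ := by rw [xxP]
  have cy' : (X * (x * x * x) * Y) * Q = X * (x * x) * Y := by
    calc (X * (x * x * x) * Y) * Q = X * (x * x * x) * (Y * Q) := by noncomm_ring
      _ = X * (x * (x * x * P)) * Y := by rw [← py]; noncomm_ring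
      _ = _ := by rw [xxP]
  have xxPP : x * x * (P * P) = P * x := by rw [← mul_assoc, xxP, h1]
  have PPxx : P * P * (x * x) = P * x := by
    rw [← xxPP]; exact ((cPx.mul_right cPx).mul_left (cPx.mul_right cPx)).eq
  have ee := idem_of h2
  set e := 1 - P * x with he
  have cPe : Commute P e := (Commute.one_right P).sub_right ((Commute.refl P).mul_right cPx)
  set r := 1 - X * (x * x) * Y with hr
  have rX : r * X = X * e := by
    calc r * X = X - X * (x * x * (Y * X)) := by rw [hr]; noncomm_ring
      _ = _ := by rw [yx, xxPP, he]; noncomm_ring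
  have Yr : Y * r = e * Y := by
    calc Y * r = Y - (Y * X) * (x * x) * Y := by rw [hr]; noncomm_ring
      _ = _ := by rw [yx, PPxx, he]; noncomm_ring
  have cQr : Q * r = r * Q := by
    have : Q * (X * (x * x) * Y) = (X * (x * x) * Y) * Q := by
      nth_rewrite 1 [← cy']
      rw [← cy]; noncomm_ring
    rw [hr, mul_sub, this]; noncomm_ring
  refine ⟨X * (x * x * x) * Y, ?_, ?_, ?_⟩
  · rw [cy, cy']
  · rw [cy']
    calc X * (x * x) * Y * (X * (x * x * x) * Y) = X * (x * x) * (Y * X) * (x * x * x) * Y := by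
          noncomm_ring
      _ = X * (x * x * (P * P) * (x * x * x)) * Y := by rw [yx]; noncomm_ring
      _ = X * ((x * P * x) * (x * x)) * Y := by rw [xxPP, h1]; noncomm_ring
      _ = _ := by rw [h2]; noncomm_ring
  · have s1 : Q - Q ^ 2 * (X * (x * x * x) * Y) = Q * r := by
      rw [pow_two, mul_assoc, cy, hr]; noncomm_ring
    have r1 : P - P ^ 2 * x = P * e := by rw [he]; noncomm_ring
    rw [s1]
    rw [r1] at h3
    exact acc_shift (shiftEq_cut ⟨py, qx, yx, xy⟩ ee cPe.eq cQr rX Yr) h3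

theorem ag_shift {A : Type*} [NormedRing A] [NormedAlgebra ℂ A] [CompleteSpace A]
    [Nontrivial A] {P Q X Y : A} (h : ShiftEq P Q X Y) {l : ℂ}
    (hP : IsAgDrazinInv (P - l • (1 : A))) : IsAgDrazinInv (Q - l • (1 : A)) := by
  by_cases hl : l = 0
  · subst hl
    simp only [zero_smul, sub_zero] at *
    exact ag_shift_zero h hP
  obtain ⟨x, h1, h2, hn⟩ := hP
  set p := P - l • (1 : A) with hp
  have hPp : P = p + l • (1 : A) := by rw [hp]; simp
  obtain ⟨z, hz1, hz2, hz3⟩ := hn (-l) (neg_ne_zero.2 hl)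
  have cpx : Commute p x := h1
  have cpr0 : Commute (p - p ^ 2 * x) p :=
    ((Commute.refl p).sub_left (((Commute.refl p).pow_left 2).mul_left cpx.symm))
  have cpr : Commute (p - p ^ 2 * x - (-l) • (1 : A)) p :=
    cpr0.sub_left (commute_smul_one _ p).symm
  have cxr : Commute (p - p ^ 2 * x - (-l) • (1 : A)) x :=
    (cpx.sub_left ((cpx.pow_left 2).mul_left (Commute.refl x))).sub_left
      (commute_smul_one _ x).symm
  have czp : Commute z p := gd_double_commute hz1 hz2 hz3 cpr
  have czx : Commute z x := gd_double_commute hz1 hz2 hz3 cxr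
  have ee := idem_of h2
  have cre : p - p ^ 2 * x = p * (1 - p * x) := by noncomm_ring
  set e := 1 - p * x with he
  set m := p - p ^ 2 * x - (-l) • (1 : A) with hm0
  have cze : Commute z e := (Commute.one_right z).sub_right (czp.mul_right czx)
  have cme : Commute m e := (Commute.one_right m).sub_right (cpr.mul_right cxr)
  have cpe : Commute p e := (Commute.one_right p).sub_right ((Commute.refl p).mul_right cpx)
  have cxe : Commute x e := (Commute.one_right x).sub_right (cpx.symm.mul_right (Commute.refl x))
  have cmz : Commute m z := hz1
  have xe : x * e = 0 := by rw [he, mul_sub, mul_one, ← mul_assoc, h2, sub_self]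
  have ex : e * x = 0 := by rw [← cxe.eq, xe]
  have hm : P * e = m * e := by
    rw [hm0, cre, hPp, sub_mul, mul_assoc, ee, add_mul]; simp
  have cPe : Commute P e := by rw [hPp]; exact cpe.add_left (commute_smul_one l e).symm
  have cPz : Commute P z := by rw [hPp]; exact czp.symm.add_left (commute_smul_one l z).symm
  -- the new spectral data
  have ff : (m * z) * (m * z) = m * z := by rw [mul_assoc, ← mul_assoc z, hz2]
  have ff' := idem_of hz2
  obtain ⟨k, hk1, hk2⟩ := exists_two ((qn_iff _).1 hz3 l hl)
  have cN : ∀ c : A, Commute m c → Commute z c → Commute k c := fun c h1 h2 =>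
    inv_commute hk1 hk2 ((h1.sub_left ((h1.pow_left 2).mul_left h2)).sub_left
      (commute_smul_one l c).symm)
  have ckp : Commute k p := cN p cpr czp
  have cke : Commute k e := cN e cme cze
  have ckx : Commute k x := cN x cxr czx
  set f := m * z with hf
  have ckf : Commute k f := cN f ((Commute.refl m).mul_right cmz) (cmz.symm.mul_right (Commute.refl z))
  have cfp : Commute f p := cpr.mul_left czp
  have cfx : Commute f x := cxr.mul_left czx
  have cfe : Commute f e := cme.mul_left cze
  have cf'p : Commute (1 - f) p := (Commute.one_left p).sub_left cfp
  have cf'x : Commute (1 - f) x := (Commute.one_left x).sub_left cfx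
  have cf'e : Commute (1 - f) e := (Commute.one_left e).sub_left cfe
  have hN : m - m ^ 2 * z = m * (1 - f) := by rw [hf]; noncomm_ring
  rw [hN] at hk1 hk2
  have pe : p * (e * (1 - f)) = (m * (1 - f) - l • (1 : A)) * (e * (1 - f)) := by
    have g1 : m * (1 - f) * (e * (1 - f)) = m * e * (1 - f) := by
      rw [mul_assoc, ← mul_assoc (1 - f) e, cf'e.eq, mul_assoc e, ff', ← mul_assoc]
    rw [sub_mul (m * (1 - f)), g1, ← hm, hp]; simp [sub_mul, mul_assoc]
  set x' := x + e * (1 - f) * k with hx'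
  have px' : p * x' = 1 - e * f := by
    have cc : Commute k (e * (1 - f)) := cke.mul_right ((Commute.one_right k).sub_right ckf)
    rw [hx', mul_add, ← mul_assoc, pe, mul_assoc, ← cc.eq, ← mul_assoc, hk1, one_mul]
    have : p * x = 1 - e := by rw [he]; simp
    rw [this]; noncomm_ring
  have cpx' : p * x' = x' * p :=
    (cpx.add_right ((cpe.mul_right cf'p.symm).mul_right ckp.symm)).eq
  have x'2 : x' * p * x' = x' := by
    have g1 : x * (e * f) = 0 := by rw [← mul_assoc, xe, zero_mul]
    have g2 : e * (1 - f) * k * (e * f) = 0 := by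
      have : (1 - f) * f = 0 := by rw [sub_mul, one_mul, ff, sub_self]
      rw [mul_assoc, (cke.mul_right ckf).eq, cfe.symm.eq, ← mul_assoc, ← mul_assoc, mul_assoc e, this]
      simp
    rw [mul_assoc, px', mul_sub, mul_one, hx', add_mul, g1, g2]; simp
  have Pw : P * (e * z) = e * f := by
    rw [← mul_assoc, hm, cme.eq, mul_assoc]
  obtain ⟨y, y1, y2, V, W, r1, r2⟩ := core (x := x') (w := e * z) hl h cpx' x'2
    (cPe.mul_right cPz).eq (by rw [Pw, ← hp, px']; simp) (by
      have : z * f = z := by rw [hf, ← mul_assoc, hz2]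
      rw [Pw, mul_assoc, ← mul_assoc z, cze.eq, mul_assoc e z, this, ← mul_assoc, ee])
  refine ⟨y, y1, y2, ?_⟩
  rw [r2]
  refine acc_shift (shiftEq_lag_one V W) ?_
  rw [← r1, ← hp]
  have : p - p ^ 2 * x' = (p - p ^ 2 * x) * f := by
    rw [cre, pow_two, mul_assoc, px']; noncomm_ring
  rw [this]
  refine acc_mul_idem hn ff ?_
  rw [cre]
  exact cfp.symm.mul_left cfe.symm

theorem agDrazinSpectrum_eq_of_acd_dbd {A : Type*} [NormedRing A] [NormedAlgebra ℂ A]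
    [CompleteSpace A] (a b c d : A) (h1 : a * c * d = d * b * d) (h2 : d * b * a = a * c * a) :
    agDrazinSpectrum (a * c) = agDrazinSpectrum (b * d) := by
  rcases subsingleton_or_nontrivial A with hA | hA
  · rw [Subsingleton.elim (a * c) (b * d)]
  have h : ShiftEq (a * c) (b * d) (b * a * c) d := by
    constructor
    · rw [h1]; noncomm_ring
    · calc b * d * (b * a * c) = b * (d * b * a) * c := by noncomm_ring
        _ = _ := by rw [h2]; noncomm_ring
    · calc d * (b * a * c) = (d * b * a) * c := by noncomm_ring
        _ = _ := by rw [h2]; noncomm_ring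
    · calc b * a * c * d = b * (a * c * d) := by noncomm_ring
        _ = _ := by rw [h1]; noncomm_ring
  ext l
  exact not_congr ⟨ag_shift h, ag_shift h.symm'⟩
end

section
/- Let A be a complex unital Banach algebra and a, b, c ∈ A satisfying aca = aba. Then the ag-Drazin spectra satisfy σ_ad(ac) = σ_ad(ba). -/
open Filter Topology

set_option linter.unusedSectionVars false
section helpers

variable {R : Type*} [Ring R] [Algebra ℂ R]

def QN (x : R) : Prop := ∀ m : ℂ, m ≠ 0 → IsUnit (x - m • (1 : R))

def GD (w : R) : Prop := ∃ e : R, e * e = e ∧ e * w = w * e ∧ IsUnit (w + e) ∧ QN (w * e)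

def AD (w : R) : Prop := ∃ x : R, w * x = x * w ∧ x * w * x = x ∧
  ∀ l : ℂ, l ≠ 0 → GD (w * (1 - w * x) - l • (1 : R))

theorem isUnit_of_inv {x y : R} (h1 : x * y = 1) (h2 : y * x = 1) : IsUnit x :=
  ⟨⟨x, y, h1, h2⟩, rfl⟩

theorem exists_inv_of_isUnit {x : R} (h : IsUnit x) : ∃ y, x * y = 1 ∧ y * x = 1 := by
  obtain ⟨u, rfl⟩ := h
  exact ⟨↑u⁻¹, by simp, by simp⟩

theorem comm_inv {x y z : R} (h1 : x * y = 1) (h2 : y * x = 1) (h : z * x = x * z) :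
    z * y = y * z := by
  calc z * y = y * x * (z * y) := by rw [h2, one_mul]
    _ = y * (x * z) * y := by simp only [mul_assoc]
    _ = y * (z * x) * y := by rw [h]
    _ = y * z * (x * y) := by simp only [mul_assoc]
    _ = y * z := by rw [h1, mul_one]

theorem jac {a b c : R} (h : a * c * a = a * b * a) {m : ℂ} (hm : m ≠ 0)
    (hu : IsUnit (a * c - m • (1 : R))) : IsUnit (b * a - m • (1 : R)) := by
  obtain ⟨u, h1, h2⟩ := exists_inv_of_isUnit hu
  have e1 : a * c * u = 1 + m • u := by
    rw [sub_mul, smul_mul_assoc, one_mul] at h1; rw [← h1]; abel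
  have e2 : u * (a * c) = 1 + m • u := by
    rw [mul_sub, mul_smul_comm, mul_one] at h2; rw [← h2]; abel
  have e3 : m • (a * b * (u * a)) = m • (a * c * (u * a)) := by
    have hu' : m • u = a * c * u - 1 := by rw [e1]; abel
    have : m • (a * b * (u * a)) = a * b * ((m • u) * a) := by simp
    rw [this]
    have : m • (a * c * (u * a)) = a * c * ((m • u) * a) := by simp
    rw [this, hu']
    have k : a * b * (a * c * u * a) = a * c * (a * c * u * a) := by
      calc a * b * (a * c * u * a) = a * b * a * (c * u * a) := by simp only [mul_assoc]
        _ = a * c * a * (c * u * a) := by rw [h]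
        _ = _ := by simp only [mul_assoc]
    rw [sub_mul, mul_sub, mul_sub, k, one_mul, h]
  have e4 : a * b * (u * a) = a * c * (u * a) := smul_right_injective R hm e3
  have e5 : a * b * (u * a) = a + m • (u * a) := by
    rw [e4, ← mul_assoc, e1, add_mul, one_mul, smul_mul_assoc]
  have e6 : u * (a * b * a) = a + m • (u * a) := by
    rw [← h, ← mul_assoc, e2, add_mul, one_mul, smul_mul_assoc]
  refine isUnit_of_inv (y := m⁻¹ • (b * (u * a) - 1)) ?_ ?_
  · have : (b * a - m • (1 : R)) * (b * (u * a) - 1) = m • 1 := by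
      have : b * a * (b * (u * a)) = b * (a * b * (u * a)) := by simp only [mul_assoc]
      rw [sub_mul, mul_sub, this, e5]
      simp only [mul_sub, mul_add, smul_mul_assoc, one_mul, mul_one, mul_smul_comm]
      module
    rw [mul_smul_comm, this, smul_smul, inv_mul_cancel₀ hm, one_smul]
  · have : (b * (u * a) - 1) * (b * a - m • (1 : R)) = m • 1 := by
      have : b * (u * a) * (b * a) = b * (u * (a * b * a)) := by simp only [mul_assoc]
      rw [sub_mul, mul_sub, this, e6]
      simp only [mul_sub, mul_add, one_mul, mul_one, mul_smul_comm]
      module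
    rw [smul_mul_assoc, this, smul_smul, inv_mul_cancel₀ hm, one_smul]

/-- data: an idempotent `p` commuting with `ac` on which `ac` is invertible with inverse `t`. -/
structure Dat (a c p t : R) : Prop where
  pp : p * p = p
  tp : t * p = t
  pt : p * t = t
  tw : t * (a * c) = p
  wt : a * c * t = p

theorem Dat.ab {a b c p t : R} (h : a * c * a = a * b * a) (D : Dat a c p t) :
    a * b * p = a * c * p := by
  calc a * b * p = a * b * (a * c * t) := by rw [D.wt]
    _ = a * b * a * (c * t) := by simp only [mul_assoc]
    _ = a * c * a * (c * t) := by rw [h]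
    _ = a * c * (a * c * t) := by simp only [mul_assoc]
    _ = _ := by rw [D.wt]

theorem Dat.abx {a b c p t x : R} (h : a * c * a = a * b * a) (D : Dat a c p t)
    (hx : p * x = x) : a * b * x = a * c * x := by
  rw [← hx, ← mul_assoc, D.ab h, mul_assoc]

/-- shift: `z` such that the twisted identity holds -/
theorem jac_shift {a b c z : R} (h : a * c * a = a * b * a) (hz : a * b * (z * a) = a * c * (z * a))
    {m : ℂ} (hm : m ≠ 0)
    (hu : IsUnit (z * (a * c) - m • (1 : R))) : IsUnit (b * (z * a) - m • (1 : R)) := by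
  have := jac (a := z * a) (b := b) (c := c) (m := m) ?_ hm (by rwa [mul_assoc])
  · exact this
  · have h1 : z * a * c * (z * a) = z * (a * c * (z * a)) := by simp only [mul_assoc]
    rw [h1, ← hz]; simp only [mul_assoc]

theorem Dat.phi_unit {a b c p t x : R} (h : a * c * a = a * b * a) (D : Dat a c p t)
    (hx : p * x = x) (hx' : x * p = x) {m : ℂ} (hm : m ≠ 0) (hu : IsUnit (x - m • (1 : R))) :
    IsUnit (b * (x * t * a) - m • (1 : R)) := by
  refine jac_shift h ?_ hm ?_
  · have := D.abx (x := x * t * a) h (by rw [← mul_assoc, ← mul_assoc, hx])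
    exact this
  · rwa [mul_assoc, D.tw, hx']

theorem Dat.phi_mul {a b c p t x y : R} (h : a * c * a = a * b * a) (D : Dat a c p t)
    (hy : p * y = y) (hx : x * p = x) :
    (b * (x * t * a)) * (b * (y * t * a)) = b * (x * y * t * a) := by
  calc (b * (x * t * a)) * (b * (y * t * a)) = b * (x * t * (a * b * y) * t * a) := by
        simp only [mul_assoc]
    _ = b * (x * (t * (a * c)) * y * t * a) := by rw [D.abx h hy]; simp only [mul_assoc]
    _ = _ := by rw [D.tw, hx]

theorem gd_transfer {a b c : R} (h : a * c * a = a * b * a) {l : ℂ} (hl : l ≠ 0)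
    (hg : GD (a * c - l • (1 : R))) : GD (b * a - l • (1 : R)) := by
  obtain ⟨e, ee, ew, hu, hq⟩ := hg
  have ew' : e * (a * c) = a * c * e := by
    simpa [mul_sub, sub_mul] using ew
  obtain ⟨u, u1, u2⟩ := exists_inv_of_isUnit (hq (-l) (neg_ne_zero.mpr hl))
  set k := (a * c - l • (1 : R)) * e - (-l) • 1 with hk
  have k1 : k * e = a * c * e := by
    rw [hk]; simp only [sub_mul, mul_assoc, ee]; simp
  have k2 : e * k = a * c * e := by
    rw [hk, mul_sub, ← mul_assoc, ew, mul_assoc, ee]; simp [sub_mul]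
  have ku : e * u = u * e := comm_inv u1 u2 (by rw [k1, k2])
  have kw : a * c * k = k * (a * c) := by
    rw [hk]; simp only [mul_sub, sub_mul, smul_mul_assoc, mul_smul_comm, one_mul, mul_one]
    rw [mul_assoc (a * c) e (a * c), ew']
  have wu : a * c * u = u * (a * c) := comm_inv u1 u2 kw
  have D : Dat a c e (u * e) := by
    refine ⟨ee, by rw [mul_assoc, ee], by rw [← mul_assoc, ku, mul_assoc, ee], ?_, ?_⟩
    · rw [mul_assoc, ew', ← k1, ← mul_assoc, u2, one_mul]
    · rw [← mul_assoc, wu, mul_assoc, ← k1, ← mul_assoc, u2, one_mul]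
  generalize u * e = t at D
  have f1 : b * a * (b * (t * a)) = b * (e * a) := by
    have := D.abx (x := t) h D.pt
    calc b * a * (b * (t * a)) = b * ((a * b * t) * a) := by simp only [mul_assoc]
      _ = _ := by rw [this, D.wt]
  have f2 : b * (t * a) * (b * a) = b * (e * a) := by
    calc b * (t * a) * (b * a) = b * (t * (a * b * a)) := by simp only [mul_assoc]
      _ = b * (t * (a * c) * a) := by rw [← h]; simp only [mul_assoc]
      _ = _ := by rw [D.tw]
  refine ⟨b * (t * a), ?_, ?_, ?_, ?_⟩
  · have := D.phi_mul h ee ee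
    rwa [ee, D.pt] at this
  · rw [mul_sub, sub_mul, f1, f2]; simp
  · have : b * a - l • (1 : R) + b * (t * a) = b * ((1 + t) * a) - l • 1 := by
      rw [add_mul, mul_add, one_mul]; abel
    rw [this]
    refine jac_shift h ?_ hl ?_
    · have := D.abx (x := t * a) h (by rw [← mul_assoc, D.pt])
      rw [add_mul, mul_add, mul_add, one_mul, this, h]
    · rw [add_mul, one_mul, D.tw]
      convert hu using 1; abel
  · intro m hm
    have := D.phi_unit (x := (a * c - l • (1 : R)) * e) h
      (by rw [← mul_assoc, ew, mul_assoc, ee]) (by rw [mul_assoc, ee]) hm (hq m hm)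
    convert this using 2
    rw [sub_mul, f1, mul_assoc _ e t, D.pt, sub_mul, D.wt, sub_mul, mul_sub]
    simp

theorem ad_transfer_zero {a b c : R} (h : a * c * a = a * b * a)
    (hg : AD (a * c)) : AD (b * a) := by
  obtain ⟨x, wx, xwx, hx⟩ := hg
  have D : Dat a c (a * c * x) x := by
    refine ⟨?_, ?_, ?_, wx.symm, rfl⟩
    · rw [mul_assoc, ← mul_assoc x, xwx]
    · rw [← mul_assoc, xwx]
    · rw [wx, xwx]
  have hab := D.abx (x := x) h D.pt
  have f1 : b * a * (b * (x * x * a)) = b * (x * a) := by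
    calc b * a * (b * (x * x * a)) = b * ((a * b * x) * x * a) := by simp only [mul_assoc]
      _ = _ := by rw [hab, D.pt]
  have f2 : b * (x * x * a) * (b * a) = b * (x * a) := by
    calc b * (x * x * a) * (b * a) = b * (x * (x * (a * b * a))) := by simp only [mul_assoc]
      _ = b * (x * (a * c) * x * a) := by rw [← h, mul_assoc x, wx]; simp only [mul_assoc]
      _ = _ := by rw [xwx]
  refine ⟨b * (x * x * a), by rw [f1, f2], ?_, ?_⟩
  · rw [f2]
    calc b * (x * a) * (b * (x * x * a)) = b * (x * (a * b * x) * x * a) := by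
          simp only [mul_assoc]
      _ = b * (x * (a * c) * x * x * a) := by rw [hab]; simp only [mul_assoc]
      _ = _ := by rw [xwx]
  · intro l hl
    have f3 : b * a * (1 - b * a * (b * (x * x * a))) = b * ((1 - a * c * x) * a) := by
      rw [f1, mul_sub, sub_mul, mul_sub]
      have : b * a * (b * (x * a)) = b * (a * b * x * a) := by simp only [mul_assoc]
      rw [this, hab]; simp
    rw [f3]
    have hz : a * b * ((1 - a * c * x) * a) = a * c * ((1 - a * c * x) * a) := by
      have := D.abx (x := a * c * x * a) h (by rw [← mul_assoc, D.pp])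
      rw [sub_mul, mul_sub, mul_sub, this, one_mul, h]
    refine gd_transfer (a := (1 - a * c * x) * a) (c := c) ?_ hl ?_
    · have h1 : (1 - a * c * x) * a * c * ((1 - a * c * x) * a)
        = (1 - a * c * x) * (a * c * ((1 - a * c * x) * a)) := by simp only [mul_assoc]
      rw [h1, ← hz]; simp only [mul_assoc]
    · convert hx l hl using 2
      rw [mul_assoc, sub_mul, mul_sub, mul_assoc _ x, wx]; simp

theorem corner {m p e : R} {l : ℂ} (hl : l ≠ 0) (h1 : m * p = m) (h2 : p * m = m)
    (ee : e * e = e) (em : e * (m - l • (1 : R)) = (m - l • 1) * e)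
    (hq : QN ((m - l • (1 : R)) * e)) : e * p = e ∧ p * e = e := by
  have hu := hq (-l) (neg_ne_zero.mpr hl)
  set k := (m - l • (1 : R)) * e - (-l) • 1 with hk
  have a1 : k * (e * (1 - p)) = 0 := by
    have : (m - l • (1 : R)) * e * (e * (1 - p)) = - l • (e * (1 - p)) := by
      rw [← mul_assoc, mul_assoc _ e e, ee, ← em, mul_assoc, sub_mul, mul_sub m, h1]
      simp
    rw [hk, sub_mul, this]; simp
  have a2 : ((1 - p) * e) * k = 0 := by
    have : ((1 - p) * e) * ((m - l • (1 : R)) * e) = - l • ((1 - p) * e) := by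
      rw [← em, ← mul_assoc, mul_assoc _ e e, ee, mul_assoc, em, ← mul_assoc, mul_sub, sub_mul _ _ m, h2]
      simp
    rw [hk, mul_sub, this]; simp
  constructor
  · have := hu.mul_right_eq_zero.mp a1
    rw [mul_sub, mul_one, sub_eq_zero] at this; exact this.symm
  · have := hu.mul_left_eq_zero.mp a2
    rw [sub_mul, one_mul, sub_eq_zero] at this; exact this.symm

theorem ad_transfer_ne {a b c x t : R} (h : a * c * a = a * b * a) {l0 : ℂ} (hl0 : l0 ≠ 0)
    {w p : R} (hw : w = a * c - l0 • (1 : R)) (hp : p = 1 - w * x)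
    (wx : w * x = x * w) (xwx : x * w * x = x)
    (hx : ∀ l : ℂ, l ≠ 0 → GD (w * p - l • (1 : R))) (D : Dat a c p t) :
    AD (b * a - l0 • (1 : R)) := by
  have wp : w * p = p - l0 • p + (a * c * p - p) := by rw [hw, sub_mul]; simp
  have pw : p * w = w * p := by
    rw [hp, sub_mul, mul_sub, one_mul, mul_one, mul_assoc, wx]
  have px : p * x = 0 := by rw [hp, sub_mul, wx, xwx, one_mul, sub_self]
  have xp : x * p = 0 := by rw [hp, mul_sub, ← mul_assoc, xwx, mul_one, sub_self]
  have wtt : w * p * t = p - l0 • t := by rw [mul_assoc, D.pt, hw, sub_mul, D.wt]; simp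
  set β := b * a - l0 • (1 : R) with hβ
  set q := b * (t * a) with hqd
  have f1 : b * a * (b * (t * a)) = b * (p * a) := by
    have := D.abx (x := t) h D.pt
    calc b * a * (b * (t * a)) = b * ((a * b * t) * a) := by simp only [mul_assoc]
      _ = _ := by rw [this, D.wt]
  have f2 : b * (t * a) * (b * a) = b * (p * a) := by
    calc b * (t * a) * (b * a) = b * (t * (a * b * a)) := by simp only [mul_assoc]
      _ = b * (t * (a * c) * a) := by rw [← h]; simp only [mul_assoc]
      _ = _ := by rw [D.tw]
  have qq : q * q = q := by
    have := D.phi_mul (b := b) h D.pp D.pp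
    rwa [D.pp, D.pt] at this
  have qβ : q * β = β * q := by rw [hβ, hqd, mul_sub, sub_mul, f1, f2]; simp
  have βq : β * q = b * (w * p * t * a) := by
    rw [wtt, hβ, hqd, sub_mul, f1, sub_mul, mul_sub]; simp
  have hU : IsUnit (β + q - β * q) := by
    have e1 : β + q - β * q = b * ((1 + t - (p - l0 • t)) * a) - l0 • 1 := by
      rw [βq, wtt, hβ, hqd, sub_mul (1 + t), add_mul, mul_sub b, mul_add b, one_mul]; abel
    rw [e1]
    refine jac_shift h ?_ hl0 ?_
    · have k1 := D.abx (x := t * a) h (by rw [← mul_assoc, D.pt])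
      have k2 := D.abx (x := (p - l0 • t) * a) h
        (by rw [← mul_assoc, mul_sub, D.pp, mul_smul_comm, D.pt])
      rw [sub_mul, add_mul, one_mul, mul_sub, mul_sub, mul_add, mul_add, k1, k2, h]
    · have e2 : (1 + t - (p - l0 • t)) * (a * c) - l0 • 1 = w + p - p * w := by
        rw [sub_mul, add_mul, D.tw, sub_mul, smul_mul_assoc, D.tw, hw, mul_sub]
        simp; abel
      rw [e2]
      refine isUnit_of_inv (y := x + p) ?_ ?_
      · have : w * x = 1 - p := by rw [hp]; abel
        simp only [sub_mul, add_mul, mul_add, px, D.pp, this, mul_assoc, ← pw]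
        simp only [← mul_assoc, D.pp, mul_sub, mul_one, sub_self]
        abel
      · have : x * w = 1 - p := by rw [hp, wx]; abel
        simp only [mul_sub, add_mul, mul_add, xp, D.pp, this, ← mul_assoc]
        simp only [zero_mul]; abel
  obtain ⟨V, V1, V2⟩ := exists_inv_of_isUnit hU
  set U := β + q - β * q with hUd
  clear_value β q
  have qU : q * U = U * q := by
    rw [hUd, mul_sub, sub_mul, mul_add, add_mul, ← mul_assoc, qβ, mul_assoc]
  have βU : β * U = U * β := by
    rw [hUd, mul_sub, sub_mul, mul_add, add_mul, mul_assoc β q β, qβ]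
  have qV := comm_inv V1 V2 qU
  have βV := comm_inv V1 V2 βU
  have βU1 : β * (1 - q) = U * (1 - q) := by
    rw [hUd, sub_mul, add_mul, mul_assoc β q]
    rw [mul_sub q, qq]; simp
  have y1 : β * (V * (1 - q)) = 1 - q := by
    rw [← mul_assoc, βV, mul_assoc, βU1, ← mul_assoc, V2, one_mul]
  have y2 : V * (1 - q) * β = 1 - q := by
    rw [mul_assoc, sub_mul, qβ, one_mul]
    have : β - β * q = β * (1 - q) := by rw [mul_sub, mul_one]
    rw [this, βU1, ← mul_assoc, V2, one_mul]
  refine ⟨V * (1 - q), by rw [y1, y2], ?_, ?_⟩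
  · rw [y2, ← mul_assoc, sub_mul 1 q V, qV, one_mul]
    have : V - V * q = V * (1 - q) := by rw [mul_sub, mul_one]
    rw [this, mul_assoc, sub_mul 1 q, mul_sub q, qq]; simp
  · intro l hl
    have : β * (1 - β * (V * (1 - q))) = β * q := by rw [y1]; congr 1; abel
    rw [this, βq]
    obtain ⟨g, gg, gw, gu, gq⟩ := hx l hl
    have wpp : w * p * p = w * p := by rw [mul_assoc, D.pp]
    have pwp : p * (w * p) = w * p := by rw [← mul_assoc, pw, mul_assoc, D.pp]
    obtain ⟨gp, pg⟩ := corner hl wpp pwp gg gw gq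
    have gw' : g * (w * p) = w * p * g := by
      simpa [mul_sub, sub_mul] using gw
    refine ⟨b * (g * t * a), ?_, ?_, ?_, ?_⟩
    · rw [D.phi_mul h pg gp, gg]
    · rw [mul_sub, sub_mul, D.phi_mul h pwp gp, D.phi_mul h pg wpp, gw']; simp
    · have := D.phi_unit (b := b) (x := w * p + g) h (by rw [mul_add, pwp, pg])
        (by rw [add_mul, wpp, gp]) hl (by convert gu using 1; abel)
      convert this using 1
      simp only [add_mul, mul_add]; abel
    · intro m hm
      have := D.phi_unit (b := b) (x := (w * p - l • (1 : R)) * g) h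
        (by rw [← gw, ← mul_assoc, pg]) (by rw [mul_assoc, gp]) hm (gq m hm)
      convert this using 2
      rw [sub_mul, D.phi_mul h pg wpp]
      simp only [sub_mul, mul_sub, smul_mul_assoc, one_mul, mul_smul_comm]

theorem unit_corner {u p : R} (hu : IsUnit u) (pp : p * p = p) (hc : p * u = u * p) {l : ℂ}
    (hl : l ≠ 0) : IsUnit (u * p - l • (1 - p)) := by
  obtain ⟨v, h1, h2⟩ := exists_inv_of_isUnit hu
  have pv := comm_inv h1 h2 hc
  have k1 : u * p * (v * p) = p := by
    rw [← pv, mul_assoc u, ← mul_assoc p p, pp, pv, ← mul_assoc, h1, one_mul]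
  have k2 : v * p * (u * p) = p := by
    rw [← hc, mul_assoc v, ← mul_assoc p p, pp, hc, ← mul_assoc, h2, one_mul]
  have z1 : ∀ y : R, y * p * (1 - p) = 0 := fun y => by
    rw [mul_assoc, mul_sub, pp, mul_one, sub_self, mul_zero]
  have z2 : (1 - p) * (v * p) = 0 := by
    rw [← pv, ← mul_assoc, sub_mul, pp, one_mul, sub_self, zero_mul]
  have z3 : (1 - p) * (u * p) = 0 := by
    rw [← hc, ← mul_assoc, sub_mul, pp, one_mul, sub_self, zero_mul]
  have z4 : (1 - p) * (1 - p) = 1 - p := by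
    rw [mul_sub, sub_mul 1 p p, pp]; simp
  refine isUnit_of_inv (y := v * p - l⁻¹ • (1 - p)) ?_ ?_
  · simp only [sub_mul _ _ (v * p - _), mul_sub _ (v * p), smul_mul_assoc, mul_smul_comm, k1, z1, z2, z4, smul_smul]
    rw [inv_mul_cancel₀ hl]; simp
  · simp only [sub_mul _ _ (u * p - _), mul_sub _ (u * p), smul_mul_assoc, mul_smul_comm, k2, z1, z3, z4, smul_smul]
    rw [mul_inv_cancel₀ hl]; simp

end helpers

section opp

variable {R : Type*} [Ring R] [Algebra ℂ R]

open MulOpposite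

theorem isUnit_op_of {x : R} (h : IsUnit x) : IsUnit (op x) := by
  obtain ⟨y, h1, h2⟩ := exists_inv_of_isUnit h
  exact isUnit_of_inv (y := op y) (by rw [← op_mul, h2, op_one]) (by rw [← op_mul, h1, op_one])

theorem isUnit_unop_of {x : Rᵐᵒᵖ} (h : IsUnit x) : IsUnit (unop x) := by
  obtain ⟨y, h1, h2⟩ := exists_inv_of_isUnit h
  exact isUnit_of_inv (y := unop y) (by rw [← unop_mul, h2, unop_one])
    (by rw [← unop_mul, h1, unop_one])

theorem QN.op' {x : R} (h : QN x) : QN (op x) := fun m hm => isUnit_op_of (h m hm)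

theorem QN.unop' {x : Rᵐᵒᵖ} (h : QN x) : QN (unop x) := fun m hm => isUnit_unop_of (h m hm)

theorem GD.op' {x : R} (h : GD x) : GD (op x) := by
  obtain ⟨e, ee, ex, hu, hq⟩ := h
  refine ⟨op e, by rw [← op_mul, ee], by rw [← op_mul, ← op_mul, ex], isUnit_op_of hu, ?_⟩
  rw [← op_mul, ex]; exact hq.op'

theorem GD.unop' {x : Rᵐᵒᵖ} (h : GD x) : GD (unop x) := by
  obtain ⟨e, ee, ex, hu, hq⟩ := h
  refine ⟨unop e, by rw [← unop_mul, ee], by rw [← unop_mul, ← unop_mul, ex],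
    isUnit_unop_of hu, ?_⟩
  rw [← unop_mul, ex]; exact hq.unop'

theorem AD.op' {w : R} (h : AD w) : AD (op w) := by
  obtain ⟨x, wx, xwx, hx⟩ := h
  refine ⟨op x, by rw [← op_mul, ← op_mul, wx], by rw [← op_mul, ← op_mul, ← mul_assoc, xwx], ?_⟩
  intro l hl
  have := (hx l hl).op'
  have e : w * (1 - w * x) = (1 - x * w) * w := by
    rw [mul_sub, sub_mul, mul_one, one_mul, wx, ← mul_assoc, wx]
  rw [e] at this
  exact this

theorem AD.unop' {w : Rᵐᵒᵖ} (h : AD w) : AD (unop w) := by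
  obtain ⟨x, wx, xwx, hx⟩ := h
  refine ⟨unop x, by rw [← unop_mul, ← unop_mul, wx],
    by rw [← unop_mul, ← unop_mul, ← mul_assoc, xwx], ?_⟩
  intro l hl
  have := (hx l hl).unop'
  have e : w * (1 - w * x) = (1 - x * w) * w := by
    rw [mul_sub, sub_mul, mul_one, one_mul, wx, ← mul_assoc, wx]
  rw [e] at this
  exact this

end opp

section banach

variable {A : Type*} [NormedRing A] [NormedAlgebra ℂ A] [CompleteSpace A]

theorem mem_spec_iff (x : A) (m : ℂ) : m ∈ spectrum ℂ x ↔ ¬ IsUnit (x - m • (1 : A)) := by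
  rw [spectrum.mem_iff, ← IsUnit.neg_iff, neg_sub, Algebra.algebraMap_eq_smul_one]

theorem QN_iff [Nontrivial A] (x : A) : IsQuasinilpotent x ↔ QN x := by
  unfold IsQuasinilpotent QN
  constructor
  · intro h m hm
    by_contra hc
    have := (mem_spec_iff x m).2 hc
    rw [h] at this
    exact hm this
  · intro h
    apply Set.Nonempty.subset_singleton_iff (spectrum.nonempty x) |>.1
    intro m hm
    by_contra hc
    exact (mem_spec_iff x m).1 hm (h m hc)

theorem GD_iff [Nontrivial A] (w : A) : IsGDrazinInv w ↔ GD w := by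
  constructor
  · rintro ⟨x, wx, xwx, hq⟩
    rw [QN_iff] at hq
    have e1 : w - w ^ 2 * x = w * (1 - w * x) := by rw [mul_sub, mul_one, sq, mul_assoc]
    have cw : (1 - w * x) * w = w * (1 - w * x) := by
      rw [sub_mul, mul_sub, mul_assoc, wx, one_mul, mul_one]
    have px : (1 - w * x) * x = 0 := by rw [sub_mul, wx, xwx, one_mul, sub_self]
    have xp : x * (1 - w * x) = 0 := by rw [mul_sub, ← mul_assoc, xwx, mul_one, sub_self]
    have pp : (1 - w * x) * (1 - w * x) = 1 - w * x := by
      rw [mul_sub, wx, ← mul_assoc, ← wx, px]; simp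
    rw [e1] at hq
    refine ⟨1 - w * x, pp, cw, ?_, hq⟩
    have hu := hq (-1) (by norm_num)
    obtain ⟨v, v1, v2⟩ := exists_inv_of_isUnit hu
    set p := 1 - w * x with hp
    have k1 : (w + p) * (x + p) = w * p - (-1 : ℂ) • 1 := by
      rw [add_mul, mul_add, mul_add, px, pp]
      have : w * x = 1 - p := by rw [hp]; abel
      rw [this]; simp; abel
    have k2 : (x + p) * (w + p) = w * p - (-1 : ℂ) • 1 := by
      rw [add_mul, mul_add, mul_add, xp, pp, cw]
      have : x * w = 1 - p := by rw [hp, wx]; abel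
      rw [this]; simp; abel
    refine isUnit_iff_exists_and_exists.2 ⟨⟨(x + p) * v, ?_⟩, ⟨v * (x + p), ?_⟩⟩
    · rw [← mul_assoc, k1, v1]
    · rw [mul_assoc, k2, v2]
  · rintro ⟨e, ee, ew, hu, hq⟩
    obtain ⟨v, v1, v2⟩ := exists_inv_of_isUnit hu
    have ev := comm_inv v1 v2 (z := e) (by rw [mul_add, add_mul, ew])
    have wv := comm_inv v1 v2 (z := w) (by rw [mul_add, add_mul, ew])
    have we : w * (1 - e) = (w + e) * (1 - e) := by rw [add_mul, mul_sub e, ee]; simp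
    have k : w * (v * (1 - e)) = 1 - e := by
      rw [← mul_assoc, wv, mul_assoc, we, ← mul_assoc, v2, one_mul]
    have k' : v * (1 - e) * w = 1 - e := by
      have : (1 - e) * w = w * (1 - e) := by rw [sub_mul, mul_sub, ew]; simp
      rw [mul_assoc, this, we, ← mul_assoc, v2, one_mul]
    refine ⟨v * (1 - e), by rw [k, k'], ?_, ?_⟩
    · rw [k', ← mul_assoc, sub_mul 1 e v, ev, one_mul]
      have : v - v * e = v * (1 - e) := by rw [mul_sub, mul_one]
      rw [this, mul_assoc, sub_mul 1 e, mul_sub e, ee]; simp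
    · rw [QN_iff, sq, mul_assoc, k, mul_sub, mul_one]
      simpa using hq

theorem AD_iff [Nontrivial A] (w : A) : IsAgDrazinInv w ↔ AD w := by
  unfold IsAgDrazinInv IsAgDrazinInverseOf AD MemAcc
  have e1 : ∀ x, w - w ^ 2 * x = w * (1 - w * x) := fun x => by
    rw [mul_sub, mul_one, sq, mul_assoc]
  simp only [GD_iff, e1]

theorem QN.pow_small {n : A} (h : QN n) (C : ℝ) (hC : 0 ≤ C) :
    Tendsto (fun k : ℕ => C ^ k * ‖n ^ k‖) atTop (𝓝 0) := by
  have h0 : spectralRadius ℂ n = 0 := by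
    unfold spectralRadius
    simp only [ENNReal.iSup_eq_zero]
    intro k hk
    by_cases h0 : k = 0
    · simp [h0]
    · exact absurd (h k h0) ((mem_spec_iff n k).1 hk)
  have ht := spectrum.pow_norm_pow_one_div_tendsto_nhds_spectralRadius n
  rw [h0] at ht
  have hr : (0 : ℝ) < 1 / (2 * (C + 1)) := by positivity
  have hev := ht.eventually (gt_mem_nhds (ENNReal.ofReal_pos.2 hr))
  have hhalf : Tendsto (fun k : ℕ => (1 / 2 : ℝ) ^ k) atTop (𝓝 0) :=
    tendsto_pow_atTop_nhds_zero_of_lt_one (by norm_num) (by norm_num)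
  refine squeeze_zero' (Eventually.of_forall fun k => by positivity) ?_ hhalf
  filter_upwards [hev, eventually_gt_atTop 0] with k hk hk0
  have h1 : ‖n ^ k‖ ^ (1 / k : ℝ) ≤ 1 / (2 * (C + 1)) :=
    ((ENNReal.ofReal_lt_ofReal_iff hr).1 hk).le
  have h2 : ‖n ^ k‖ ≤ (1 / (2 * (C + 1))) ^ k := by
    calc ‖n ^ k‖ = (‖n ^ k‖ ^ (1 / k : ℝ)) ^ k := by
          rw [one_div, Real.rpow_inv_natCast_pow (norm_nonneg _) hk0.ne']
      _ ≤ _ := by gcongr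
  calc C ^ k * ‖n ^ k‖ ≤ C ^ k * (1 / (2 * (C + 1))) ^ k := by gcongr
    _ = (C * (1 / (2 * (C + 1)))) ^ k := by rw [mul_pow]
    _ ≤ (1 / 2) ^ k := by
        gcongr
        rw [mul_one_div, div_le_div_iff₀ (by positivity) (by norm_num)]
        linarith

theorem rosenblum {X n n' : A} (hn : QN n) (hn' : QN n') {m : ℂ} (hm : m ≠ 0)
    (h : n * X + m • X = X * n') : X = 0 := by
  obtain ⟨v, v1, v2⟩ := exists_inv_of_isUnit (hn (-m) (neg_ne_zero.2 hm))
  have h1 : X = v * X * n' := by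
    rw [mul_assoc, ← h]
    have : n * X + m • X = (n - (-m) • 1) * X := by rw [sub_mul]; simp
    rw [this, ← mul_assoc, v2, one_mul]
  have hk : ∀ k : ℕ, X = v ^ k * X * n' ^ k := by
    intro k
    induction k with
    | zero => simp
    | succ k ih =>
      calc X = v ^ k * X * n' ^ k := ih
        _ = v ^ k * (v * X * n') * n' ^ k := by rw [← h1]
        _ = _ := by rw [pow_succ v, pow_succ' n']; simp only [mul_assoc]
  have hb : ∀ᶠ k : ℕ in atTop, ‖X‖ ≤ ‖X‖ * (‖v‖ ^ k * ‖n' ^ k‖) := by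
    filter_upwards [eventually_gt_atTop 0] with k hk0
    calc ‖X‖ = ‖v ^ k * X * n' ^ k‖ := by rw [← hk k]
      _ ≤ ‖v ^ k‖ * ‖X‖ * ‖n' ^ k‖ := (norm_mul_le _ _).trans (by gcongr; exact norm_mul_le _ _)
      _ ≤ ‖v‖ ^ k * ‖X‖ * ‖n' ^ k‖ := by gcongr; exact norm_pow_le' v hk0
      _ = _ := by ring
  have := (hn'.pow_small ‖v‖ (norm_nonneg _)).const_mul ‖X‖
  rw [mul_zero] at this
  exact norm_le_zero_iff.1 (ge_of_tendsto this hb)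

theorem rosenblum' {X n n' : A} (hn : QN n) (hn' : QN n') {m : ℂ} (hm : m ≠ 0)
    (h : X * n + m • X = n' * X) : X = 0 := by
  have := rosenblum (X := MulOpposite.op X) hn.op' hn'.op' hm (by
    rw [← MulOpposite.op_mul, ← MulOpposite.op_mul, ← h]; rfl)
  simpa using this

theorem ad_transfer {a b c : A} (h : a * c * a = a * b * a) {l0 : ℂ}
    (hg : AD (a * c - l0 • (1 : A))) : AD (b * a - l0 • (1 : A)) := by
  by_cases hl0 : l0 = 0
  · subst hl0
    simp only [zero_smul, sub_zero] at hg ⊢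
    exact ad_transfer_zero h hg
  obtain ⟨x, wx, xwx, hx⟩ := hg
  obtain ⟨w, hw⟩ : ∃ w, w = a * c - l0 • (1 : A) := ⟨_, rfl⟩
  rw [← hw] at wx xwx hx
  obtain ⟨p, hp⟩ : ∃ p, p = 1 - w * x := ⟨_, rfl⟩
  rw [← hp] at hx
  have wx1 : w * x = 1 - p := by rw [hp]; abel
  have xw1 : x * w = 1 - p := by rw [← wx, wx1]
  have pw : p * w = w * p := by
    rw [hp, sub_mul, mul_sub, one_mul, mul_one, mul_assoc, wx]
  have px : p * x = 0 := by rw [hp, sub_mul, wx, xwx, one_mul, sub_self]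
  have xp : x * p = 0 := by rw [hp, mul_sub, ← mul_assoc, xwx, mul_one, sub_self]
  have pp : p * p = p := by
    have : p * (1 - p) = 0 := by rw [← xw1, ← mul_assoc, px, zero_mul]
    rw [mul_sub, mul_one, sub_eq_zero] at this; exact this.symm
  obtain ⟨m, hm⟩ : ∃ m, m = w * p := ⟨_, rfl⟩
  rw [← hm] at hx
  have mp : m * p = m := by rw [hm, mul_assoc, pp]
  have pm : p * m = m := by rw [hm, ← mul_assoc, pw, mul_assoc, pp]
  have hl0' : -l0 ≠ 0 := neg_ne_zero.2 hl0
  obtain ⟨e, ee, em, eu, eq⟩ := hx (-l0) hl0'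
  obtain ⟨ep, pe⟩ := corner hl0' mp pm ee em eq
  have em' : e * m = m * e := by simpa [mul_sub, sub_mul, mul_add, add_mul] using em
  have we : w * e = m * e := by rw [hm, mul_assoc, pe]
  have ew : e * w = m * e := by rw [← em', hm, ← pw, ← mul_assoc, ep]
  -- inverse of `w` on `e`
  obtain ⟨v, v1, v2⟩ := exists_inv_of_isUnit (eq l0 hl0)
  set k := (m - (-l0) • (1 : A)) * e - l0 • 1 with hk
  have ke : k * e = m * e := by
    rw [hk, sub_mul, mul_assoc, ee, sub_mul]; simp
  have ek : e * k = m * e := by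
    rw [hk, mul_sub, ← mul_assoc, em, mul_assoc, ee, sub_mul]; simp
  have ev := comm_inv v1 v2 (z := e) (by rw [ke, ek])
  obtain ⟨r, hr⟩ : ∃ r, r = v * e := ⟨_, rfl⟩
  have re : r * e = r := by rw [hr, mul_assoc, ee]
  have er : e * r = r := by rw [hr, ← mul_assoc, ev, mul_assoc, ee]
  have rw1 : r * w = e := by rw [hr, mul_assoc, ew, ← ke, ← mul_assoc, v2, one_mul]
  have wr1 : w * r = e := by
    rw [← er, ← mul_assoc, we, ← ek, mul_assoc, hr, ← mul_assoc k, v1, one_mul, ee]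
  have rx : r * x = 0 := by rw [← re, ← ep, mul_assoc, mul_assoc, px]; simp
  have xr : x * r = 0 := by rw [← er, ← pe, ← mul_assoc, ← mul_assoc, xp]; simp
  clear_value k
  obtain ⟨p2, hp2⟩ : ∃ p2, p2 = p - e := ⟨_, rfl⟩
  have p2p2 : p2 * p2 = p2 := by
    rw [hp2, mul_sub, sub_mul, sub_mul, pp, ee, ep, pe]; abel
  have p2w : p2 * w = w * p2 := by rw [hp2, sub_mul, mul_sub, pw, ew, we]
  have p2m : p2 * m = m * p2 := by rw [hp2, sub_mul, mul_sub, pm, mp, em']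
  have p2e : p2 * e = 0 := by rw [hp2, sub_mul, pe, ee, sub_self]
  have ep2 : e * p2 = 0 := by rw [hp2, mul_sub, ep, ee, sub_self]
  have wp2 : w * p2 = m * p2 := by
    rw [hm, mul_assoc, hp2, mul_sub p, pp, pe]
  set K := m - (-l0) • (1 : A) + e with hK
  have p2K : p2 * K = K * p2 := by
    rw [hK, mul_add, add_mul, mul_sub, sub_mul, p2m, p2e, ep2]; simp
  have Kp2 : K * p2 = a * c * p2 := by
    have : a * c = w + l0 • 1 := by rw [hw]; abel
    rw [hK, this, add_mul, add_mul, sub_mul, ep2, wp2]; simp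
  refine ad_transfer_ne (x := x + r) (w := w) (p := p2) (t := ?_) h hl0 hw ?_ ?_ ?_ ?_ ?_
  · exact Classical.choose (exists_inv_of_isUnit eu) * p2
  · rw [mul_add, wx1, wr1, hp2]; abel
  · rw [mul_add, add_mul, wx1, wr1, xw1, rw1]
  · rw [add_mul, xw1, rw1, mul_add, add_mul, add_mul, sub_mul, sub_mul, px, ← er, ← mul_assoc p, pe,
      er]
    have : e * x = 0 := by rw [← ep, mul_assoc, px, mul_zero]
    rw [this, er]; simp
  · intro l hl
    rw [wp2]
    by_cases hll : l = -l0
    · subst hll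
      refine ⟨0, by simp, by simp, ?_, ?_⟩
      · have := unit_corner eu p2p2 p2K hl
        convert this using 1
        rw [hK, add_mul, sub_mul, ep2]
        simp [smul_sub]
      · intro μ hμ
        rw [mul_zero, zero_sub, IsUnit.neg_iff]
        exact isUnit_of_inv (y := μ⁻¹ • (1 : A)) (by simp [smul_smul, hμ]) (by simp [smul_smul, hμ])
    · have hμ : l + l0 ≠ 0 := fun hc => hll (eq_neg_of_add_eq_zero_left hc)
      obtain ⟨g, gg, gm, gu, gq⟩ := hx l hl
      obtain ⟨gp, pg⟩ := corner hl mp pm gg gm gq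
      have gm' : g * m = m * g := by simpa [mul_sub, sub_mul] using gm
      have ge : g * e = 0 := by
        refine rosenblum gq eq hμ ?_
        have i1 : (m - l • (1 : A)) * g * (g * e) = g * (m * e) - l • (g * e) := by
          rw [← mul_assoc, mul_assoc _ g g, gg, ← gm, mul_assoc, sub_mul, mul_sub]; simp
        have i2 : g * e * ((m - (-l0) • (1 : A)) * e) = g * (m * e) + l0 • (g * e) := by
          rw [mul_assoc, ← mul_assoc e, em, mul_assoc _ e, ee, sub_mul, mul_sub]; simp
        rw [i1, i2]; module
      have eg : e * g = 0 := by
        refine rosenblum' gq eq hμ ?_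
        have i1 : e * g * ((m - l • (1 : A)) * g) = e * (m * g) - l • (e * g) := by
          rw [mul_assoc, ← mul_assoc g, gm, mul_assoc _ g, gg, sub_mul, mul_sub]; simp
        have i2 : ((m - (-l0) • (1 : A)) * e) * (e * g) = e * (m * g) + l0 • (e * g) := by
          rw [← mul_assoc, mul_assoc _ e e, ee, ← em, mul_assoc, sub_mul, mul_sub]; simp
        rw [i1, i2]; module
      have gp2 : g * p2 = g := by rw [hp2, mul_sub, gp, ge, sub_zero]
      have p2g : p2 * g = g := by rw [hp2, sub_mul, pg, eg, sub_zero]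
      refine ⟨g, gg, ?_, ?_, ?_⟩
      · rw [mul_sub, sub_mul, mul_assoc m, p2g, ← p2m, ← mul_assoc, gp2, gm']; simp
      · have := unit_corner gu p2p2
          (by rw [mul_add, add_mul, mul_sub, sub_mul, p2m, gp2, p2g]; simp) hl
        convert this using 1
        rw [add_mul, sub_mul, gp2]
        simp [smul_sub]; abel
      · have : (m * p2 - l • (1 : A)) * g = (m - l • 1) * g := by
          rw [sub_mul, mul_assoc, p2g, sub_mul]
        rw [this]; exact gq
  · obtain ⟨V1, V2⟩ := Classical.choose_spec (exists_inv_of_isUnit eu)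
    set V := Classical.choose (exists_inv_of_isUnit eu)
    have p2V := comm_inv V1 V2 p2K
    have p2ac : p2 * (a * c) = a * c * p2 := by
      have : a * c = w + l0 • 1 := by rw [hw]; abel
      rw [this, mul_add, add_mul, p2w]; simp
    refine ⟨p2p2, by rw [mul_assoc, p2p2], by rw [← mul_assoc, p2V, mul_assoc, p2p2], ?_, ?_⟩
    · rw [mul_assoc, p2ac, ← Kp2, ← mul_assoc, V2, one_mul]
    · have : V * p2 = p2 * (V * p2) := by rw [← mul_assoc, p2V, mul_assoc, p2p2]
      rw [this, ← mul_assoc, ← Kp2, mul_assoc, ← mul_assoc p2, p2V, mul_assoc, p2p2, ← mul_assoc, V1, one_mul]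

end banach

theorem agDrazinSpectrum_eq_of_aca_aba {A : Type*} [NormedRing A] [NormedAlgebra ℂ A]
    [CompleteSpace A] (a b c : A) (h : a * c * a = a * b * a) :
    agDrazinSpectrum (a * c) = agDrazinSpectrum (b * a) := by
  rcases subsingleton_or_nontrivial A with hA | hA
  · rw [Subsingleton.elim (a * c) (b * a)]
  · unfold agDrazinSpectrum
    ext l
    simp only [Set.mem_setOf_eq, AD_iff]
    refine not_congr ⟨ad_transfer h, fun hb => ?_⟩
    have := ad_transfer (a := MulOpposite.op a) (b := MulOpposite.op c) (c := MulOpposite.op b)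
      (l0 := l) (by
        simp only [← MulOpposite.op_mul, ← mul_assoc]; rw [h]) hb.op'
    exact this.unop'
end

section
/- Let A be a complex unital Banach algebra, let a ∈ A be ag-Drazin invertible, and let b ∈ A be generalized Drazin invertible with ab = ba = 0. Then a + b is ag-Drazin invertible. -/
open Filter Topology

lemma qn_unit {A : Type*} [NormedRing A] [NormedAlgebra ℂ A] {q : A}
    (hq : IsQuasinilpotent q) {l : ℂ} (hl : l ≠ 0) : IsUnit (l • (1 : A) - q) := by
  have h : l ∉ spectrum ℂ q := by rw [hq]; simpa using hl
  rw [spectrum.notMem_iff, Algebra.algebraMap_eq_smul_one] at h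
  exact h

lemma acc_add_qn {A : Type*} [NormedRing A] [NormedAlgebra ℂ A] {a q : A}
    (ha : MemAcc a) (hq : IsQuasinilpotent q) (haq : a * q = 0) (hqa : q * a = 0) :
    MemAcc (a + q) := by
  intro l hl
  obtain ⟨z, h1, h2, h3⟩ := ha l hl
  set c := a - l • (1 : A) with hc
  have hcq : c * q = -(l • q) := by rw [hc, sub_mul, haq]; simp
  have hqc : q * c = -(l • q) := by rw [hc, mul_sub, hqa]; simp
  set n := c - c ^ 2 * z with hn
  have hu : IsUnit ((-l) • (1 : A) - n) := qn_unit h3 (neg_ne_zero.mpr hl)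
  have hcp : n = c * (1 - c * z) := by rw [hn]; noncomm_ring
  have hcp' : n = (1 - c * z) * c := by rw [hn, sub_mul, mul_assoc c z c, ← h1]; noncomm_ring
  have hidem : (1 - c * z) * (1 - c * z) = 1 - c * z := by
    have : c * z * (c * z) = c * z := by rw [mul_assoc, ← mul_assoc z, h2]
    rw [sub_mul, mul_sub, mul_sub, this]; simp
  have hpq : (1 - c * z) * q = 0 := by
    apply (hu.mul_right_eq_zero).1
    have : n * ((1 - c * z) * q) = (1 - c * z) * (c * q) := by
      rw [hcp, ← mul_assoc, mul_assoc c, hidem, ← hcp, hcp', mul_assoc]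
    rw [sub_mul, this, hcq]; simp
  have hqp : q * (1 - c * z) = 0 := by
    apply (hu.mul_left_eq_zero).1
    have : (q * (1 - c * z)) * n = (q * c) * (1 - c * z) := by
      rw [hcp', mul_assoc, ← mul_assoc (1 - c * z), hidem, ← hcp', hcp, mul_assoc]
    rw [mul_sub, this, hqc]; simp
  have hzq : q = -(l • (z * q)) := by
    rw [sub_mul, one_mul, sub_eq_zero, h1, mul_assoc, hcq] at hpq
    simpa using hpq
  have hqz : q = -(l • (q * z)) := by
    rw [mul_sub, mul_one, sub_eq_zero, ← mul_assoc, hqc] at hqp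
    simpa using hqp
  have hcomm : z * q = q * z := by
    have h := hzq.symm.trans hqz
    exact smul_right_injective A hl (neg_injective h)
  obtain ⟨u, hu'⟩ := qn_unit hq hl
  have hd : a + q - l • (1 : A) = c + q := by rw [hc]; abel
  rw [hd]
  have huc : (u : A) * c = l • (c + q) := by
    rw [hu', sub_mul, hqc]; simp
  have hcu : c * (u : A) = l • (c + q) := by
    rw [hu', mul_sub, hcq]; simp
  have hCc : Commute c (↑u⁻¹ : A) := Commute.units_inv_right (hcu.trans huc.symm)
  have hCz : Commute z (↑u⁻¹ : A) := by
    apply Commute.units_inv_right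
    show z * (u : A) = u * z
    rw [hu', mul_sub, sub_mul, hcomm]; simp
  have hdc : c + q = l⁻¹ • ((u : A) * c) := by rw [huc, smul_smul, inv_mul_cancel₀ hl, one_smul]
  have hdc' : c + q = l⁻¹ • (c * (u : A)) := by rw [hcu, smul_smul, inv_mul_cancel₀ hl, one_smul]
  have hdw : (c + q) * (l • (↑u⁻¹ * z)) = c * z := by
    rw [hdc', smul_mul_smul_comm, inv_mul_cancel₀ hl, one_smul, mul_assoc, Units.mul_inv_cancel_left]
  have hwd : (l • (↑u⁻¹ * z)) * (c + q) = c * z := by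
    rw [← hCz.eq, hdc, smul_mul_smul_comm, mul_inv_cancel₀ hl, one_smul, mul_assoc,
      Units.inv_mul_cancel_left, h1]
  refine ⟨l • (↑u⁻¹ * z), hdw.trans hwd.symm, ?_, ?_⟩
  · rw [hwd, mul_smul_comm, ← hCz.eq, ← mul_assoc, h1, h2]
  · have : c + q - (c + q) ^ 2 * (l • (↑u⁻¹ * z)) = n := by
      rw [pow_two, mul_assoc, hdw, hcp]
      have : c + q - (c + q) * (c * z) = c * (1 - c * z) + q * (1 - c * z) := by noncomm_ring
      rw [this, hqp, add_zero]
    rw [this]; exact h3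

theorem agDrazin_add_gDrazin_orthogonal {A : Type*} [NormedRing A] [NormedAlgebra ℂ A]
    [CompleteSpace A] (a b : A) (ha : IsAgDrazinInv a) (hb : IsGDrazinInv b)
    (hab : a * b = 0) (hba : b * a = 0) :
    IsAgDrazinInv (a + b) := by
  obtain ⟨x, x1, x2, x3⟩ := ha
  obtain ⟨y, y1, y2, y3⟩ := hb
  have hx : x = a * (x * x) := by rw [← mul_assoc, x1, x2]
  have hx' : x = x * x * a := by rw [mul_assoc, ← x1, ← mul_assoc, x2]
  have hy : y = b * (y * y) := by rw [← mul_assoc, y1, y2]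
  have hy' : y = y * y * b := by rw [mul_assoc, ← y1, ← mul_assoc, y2]
  have hay : a * y = 0 := by rw [hy, ← mul_assoc, hab, zero_mul]
  have hya : y * a = 0 := by rw [hy', mul_assoc, hba, mul_zero]
  have hbx : b * x = 0 := by rw [hx, ← mul_assoc, hba, zero_mul]
  have hxb : x * b = 0 := by rw [hx', mul_assoc, hab, mul_zero]
  have hxy : x * y = 0 := by rw [hx', mul_assoc, hay, mul_zero]
  have hyx : y * x = 0 := by rw [hy', mul_assoc, hbx, mul_zero]
  have e1 : (a + b) * (x + y) = a * x + b * y := by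
    rw [add_mul, mul_add, mul_add, hay, hbx]; simp
  have e2 : (x + y) * (a + b) = x * a + y * b := by
    rw [add_mul, mul_add, mul_add, hya, hxb]; simp
  refine ⟨x + y, ?_, ?_, ?_⟩
  · rw [e1, e2, x1, y1]
  · rw [e2, add_mul, mul_add, mul_add, x2, y2, ← x1, ← y1, mul_assoc a, hxy, mul_assoc b, hyx]
    simp
  · have : a + b - (a + b) ^ 2 * (x + y) = (a - a ^ 2 * x) + (b - b ^ 2 * y) := by
      have h : (a + b) * (a * x + b * y)
          = a * (a * x) + (a * b) * y + ((b * a) * x + b * (b * y)) := by noncomm_ring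
      rw [pow_two, mul_assoc, e1, h, hab, hba]
      noncomm_ring
    rw [this]
    have p1 : a - a ^ 2 * x = (1 - a * x) * a := by
      rw [sub_mul, mul_assoc, ← x1]; noncomm_ring
    have p2 : b - b ^ 2 * y = (1 - b * y) * b := by
      rw [sub_mul, mul_assoc, ← y1]; noncomm_ring
    have p1' : a - a ^ 2 * x = a * (1 - a * x) := by noncomm_ring
    have p2' : b - b ^ 2 * y = b * (1 - b * y) := by noncomm_ring
    apply acc_add_qn x3 y3
    · rw [p1, p2', mul_assoc, ← mul_assoc a, hab]; simp
    · rw [p1', p2, mul_assoc, ← mul_assoc b, hba]; simp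
end

section
/- Let A be a complex unital Banach algebra and a ∈ A. Then a is ag-Drazin invertible if and only if a admits a decomposition a = x + y with xy = 0 = yx, x group invertible, and y ∈ A^acc. -/
open Filter Topology

theorem agDrazin_iff_core_acc_decomposition {A : Type*} [NormedRing A] [NormedAlgebra ℂ A]
    [CompleteSpace A] (a : A) :
    IsAgDrazinInv a ↔
      ∃ x y : A, a = x + y ∧ x * y = 0 ∧ y * x = 0 ∧
        (∃ z : A, x * z = z * x ∧ z * x * z = z ∧ x * z * x = x) ∧ MemAcc y := by
  constructor
  · rintro ⟨x, h1, h2, h3⟩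
    have e1 : a * x * x = x := by rw [h1, h2]
    have e2 : x * x * a = x := by rw [mul_assoc, ← h1, ← mul_assoc, h2]
    have c : Commute a x := h1
    have c2 : Commute (a ^ 2) x := c.pow_left 2
    have e3 : a ^ 2 * x * x = a * x := by rw [pow_two, mul_assoc a a x, mul_assoc, e1]
    have e4 : x * (a ^ 2 * x) = a * x := by rw [← mul_assoc, ← c2.eq, e3]
    have e5 : a * x * (a ^ 2 * x) = a ^ 2 * x := by
      rw [mul_assoc, e4, ← mul_assoc, pow_two]
    have e6 : a ^ 2 * x * a = a * (a ^ 2 * x) := by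
      rw [mul_assoc, ← h1, ← mul_assoc, ← mul_assoc, ← pow_succ, ← pow_succ']
    have e7 : a ^ 2 * x * (a ^ 2 * x) = a * (a ^ 2 * x) := by
      rw [mul_assoc, e4, pow_two, mul_assoc, mul_assoc]
    refine ⟨a ^ 2 * x, a - a ^ 2 * x, by abel, ?_, ?_, ⟨x, ?_, ?_, ?_⟩, h3⟩
    · rw [mul_sub, e6, e7, sub_self]
    · rw [sub_mul, e7, sub_self]
    · rw [e3, e4]
    · rw [e4, e1]
    · rw [e3, e5]
  · rintro ⟨x, y, rfl, hxy, hyx, ⟨z, h1, h2, h3⟩, hy⟩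
    have yz : y * z = 0 := by
      rw [← h2, ← h1, mul_assoc, ← mul_assoc, hyx, zero_mul]
    have zy : z * y = 0 := by
      rw [← h2, mul_assoc z x z, h1, mul_assoc, mul_assoc, hxy, mul_zero, mul_zero]
    have e1 : (x + y) * z = x * z := by rw [add_mul, yz, add_zero]
    have e2 : z * (x + y) = z * x := by rw [mul_add, zy, add_zero]
    refine ⟨z, ?_, ?_, ?_⟩
    · rw [e1, e2, h1]
    · rw [e2, h2]
    · have e : (x + y) ^ 2 * z = x := by
        rw [pow_two, mul_assoc, e1, add_mul, ← mul_assoc y, hyx, zero_mul, add_zero, h1,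
          ← mul_assoc, h3]
      rw [e, add_sub_cancel_left]
      exact hy
end

section
/- Let X be a complex Banach space, let T be a bounded linear operator on X that is ag-Drazin invertible in the Banach algebra L(X) of bounded linear operators on X, and let F be a bounded linear operator on X such that F^n has finite rank for some positive integer n (i.e., the range of F^n is finite-dimensional). If TF = FT, then T + F is ag-Drazin invertible in L(X). -/
open Filter Topology

theorem aux_model.{u} {A : Type u} [NormedRing A] [NormedAlgebra ℂ A] [CompleteSpace A]
    (s : Set A) (hs : ∀ x ∈ s, ∀ y ∈ s, x * y = y * x) :
    ∃ (R : Type u) (_ : NormedCommRing R) (_ : NormedAlgebra ℂ R) (_ : CompleteSpace R)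
      (ι : R →ₐ[ℂ] A), Function.Injective ι ∧
        Set.range ι = Set.centralizer (Set.centralizer s) := by
  let C := Subalgebra.centralizer ℂ (Set.centralizer s)
  have hcl : IsClosed (C : Set A) := Set.isClosed_centralizer _
  let _ : NormedCommRing C :=
    { (inferInstance : NormedRing C) with
      mul_comm := fun a b => Subtype.ext
        (Set.centralizer_centralizer_comm_of_comm hs _ a.2 _ b.2) }
  let _ : NormedAlgebra ℂ C := Subalgebra.toNormedAlgebra C
  refine ⟨C, inferInstance, inferInstance, hcl.completeSpace_coe, C.val, Subtype.val_injective, ?_⟩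
  ext x
  constructor
  · rintro ⟨y, rfl⟩
    exact y.2
  · intro hx
    exact ⟨⟨x, hx⟩, rfl⟩

theorem aux_idem {R : Type*} [CommRing R] [Algebra ℂ R] {f : R} (hf : f * f = f)
    (φ : R →ₐ[ℂ] ℂ) : φ f = 0 ∨ φ f = 1 := by
  have h : φ f * φ f = φ f := by rw [← map_mul, hf]
  have : φ f * (φ f - 1) = 0 := by linear_combination h
  rcases mul_eq_zero.1 this with h | h
  · exact Or.inl h
  · exact Or.inr (by linear_combination h)

section comm
variable {R : Type*} [NormedCommRing R] [NormedAlgebra ℂ R] [CompleteSpace R]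

theorem aux_spec (a : R) (z : ℂ) : z ∈ spectrum ℂ a ↔ ∃ φ : R →ₐ[ℂ] ℂ, φ a = z := by
  constructor
  · intro h
    obtain ⟨f, hf⟩ := WeakDual.CharacterSpace.mem_spectrum_iff_exists.1 h
    exact ⟨WeakDual.CharacterSpace.toAlgHom f, hf⟩
  · rintro ⟨φ, rfl⟩
    exact AlgHom.apply_mem_spectrum φ a

theorem aux_bound (φ : R →ₐ[ℂ] ℂ) (a : R) : ‖φ a‖ ≤ ‖a‖ * ‖(1 : R)‖ :=
  spectrum.norm_le_norm_mul_of_mem (AlgHom.apply_mem_spectrum φ a)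

theorem aux_unit (a : R) : IsUnit a ↔ ∀ φ : R →ₐ[ℂ] ℂ, φ a ≠ 0 := by
  rw [← not_iff_not, ← spectrum.zero_mem_iff ℂ, aux_spec]
  simp

/-- `f` is the spectral idempotent of `a` off zero. -/
def SI (a f : R) : Prop := f * f = f ∧ ∀ φ : R →ₐ[ℂ] ℂ, φ a = 0 ↔ φ f = 0

theorem aux_inv {a f : R} (hf : f * f = f) (h : ∀ φ : R →ₐ[ℂ] ℂ, φ f = 1 → φ a ≠ 0) :
    ∃ x : R, a * x = f ∧ x * f = x := by
  have hu : IsUnit (a * f + (1 - f)) := by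
    rw [aux_unit]
    intro φ
    rcases aux_idem hf φ with h0 | h1
    · simp [h0]
    · simpa [h1] using h φ h1
  obtain ⟨v, hv⟩ := hu.exists_right_inv
  exact ⟨v * f, by linear_combination f * hv + (1 - a) * v * hf, by linear_combination v * hf⟩

theorem aux_int {a : R} (ha : IsIntegral ℂ a) (n : ℕ) (hn : 0 < n) :
    ∃ f c : R, SI a f ∧ f = a ^ n * c := by
  obtain ⟨p, hp, hpa⟩ := ha
  obtain ⟨q, hq, hnd⟩ := p.exists_eq_pow_rootMultiplicity_mul_and_not_dvd hp.ne_zero 0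
  generalize p.rootMultiplicity 0 = j at hq
  simp only [map_zero, sub_zero] at hq hnd
  have hcop : IsCoprime (Polynomial.X ^ (j + n) : Polynomial ℂ) q := by
    apply IsCoprime.pow_left
    exact (Polynomial.irreducible_X.coprime_iff_not_dvd).2 hnd
  obtain ⟨α, β, hab⟩ := hcop
  set a1 := Polynomial.aeval a α
  set b1 := Polynomial.aeval a β
  set q1 := Polynomial.aeval a q with hq1
  have h1 : a1 * a ^ (j + n) + b1 * q1 = 1 := by
    have := congrArg (Polynomial.aeval a) hab
    simpa using this
  have h2 : a ^ j * q1 = 0 := by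
    have : Polynomial.aeval a p = 0 := hpa
    rw [hq] at this
    simpa using this
  have h3 : a ^ (j + n) * q1 = 0 := by rw [pow_add]; linear_combination a ^ n * h2
  refine ⟨a1 * a ^ (j + n), a1 * a ^ j, ⟨?_, ?_⟩, by rw [pow_add]; ring⟩
  · linear_combination a1 * a ^ (j + n) * h1 - a1 * b1 * h3
  · intro φ
    constructor
    · intro h
      rw [map_mul, map_pow, h, zero_pow (by omega), mul_zero]
    · intro h
      by_contra h0
      have e1 := congrArg φ h1
      have e3 := congrArg φ h3
      simp only [map_add, map_mul, map_pow, map_one, map_zero] at e1 e3 h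
      have hq0 : φ q1 = 0 := by
        rcases mul_eq_zero.1 e3 with h | h
        · exact absurd h (pow_ne_zero _ h0)
        · exact h
      rw [h, hq0] at e1
      simp at e1

theorem aux_step2 {t F e P : R} (he : e * e = e) (het : ∀ φ : R →ₐ[ℂ] ℂ, φ e = 1 → φ t ≠ 0)
    (hacc : ∀ l : ℂ, l ≠ 0 → ∃ f, SI (t * (1 - e) - l • (1 : R)) f)
    (hP : SI F P)
    (hR : ∀ l : ℂ, l ≠ 0 → ∃ f, SI ((t + F) * P - l • (1 : R)) f) :
    ∃ e' : R, e' * e' = e' ∧ (∀ φ : R →ₐ[ℂ] ℂ, φ e' = 1 → φ (t + F) ≠ 0) ∧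
      ∀ l : ℂ, l ≠ 0 → ∃ f, SI ((t + F) * (1 - e') - l • (1 : R)) f := by
  obtain ⟨hPi, hPF⟩ := hP
  have hie : (e * (1 - P)) * (e * (1 - P)) = e * (1 - P) := by
    linear_combination (1 - P) ^ 2 * he + e * hPi
  refine ⟨e * (1 - P), hie, ?_, ?_⟩
  · intro φ h
    rcases aux_idem hPi φ with h0 | h1
    · have := (hPF φ).2 h0
      have h' : φ e = 1 := by simpa [h0] using h
      simpa [this] using het φ h'
    · simp [h1] at h
  · intro l hl
    obtain ⟨f, hf, hf'⟩ := hacc l hl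
    obtain ⟨g, hg, hg'⟩ := hR l hl
    refine ⟨f * (1 - P) + g * P, ?_, ?_⟩
    · linear_combination (1 - P) ^ 2 * hf + P ^ 2 * hg + (f + g - 2 * f * g) * hPi
    · intro φ
      rcases aux_idem hPi φ with h0 | h1
      · have := (hPF φ).2 h0
        have h' := hf' φ
        simpa [h0, this] using h'
      · have h' := hg' φ
        simpa [h1] using h'

theorem aux_isolated {b f : R} {l : ℂ} (h : SI (b - l • (1 : R)) f) :
    ∃ δ > 0, ∀ φ : R →ₐ[ℂ] ℂ, ‖φ b - l‖ < δ → φ b = l := by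
  obtain ⟨hf, hf'⟩ := h
  obtain ⟨x, hx, -⟩ := aux_inv (a := b - l • (1 : R)) hf (by
    intro φ h1 h0
    rw [hf' φ, h1] at h0
    exact one_ne_zero h0)
  refine ⟨(‖x‖ * ‖(1 : R)‖ + 1)⁻¹, by positivity, ?_⟩
  intro φ hlt
  rcases aux_idem hf φ with h0 | h1
  · have := (hf' φ).2 h0
    simp at this
    linear_combination this
  · exfalso
    have e := congrArg φ hx
    rw [h1] at e
    simp at e
    have e' := congrArg norm e
    rw [norm_mul, norm_one] at e'
    have hb := aux_bound φ x
    have h2 : (0:ℝ) < ‖x‖ * ‖(1 : R)‖ + 1 := by positivity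
    have h3 : ‖φ b - l‖ * (‖x‖ * ‖(1 : R)‖ + 1) < 1 := by
      have := mul_lt_mul_of_pos_right hlt h2
      rwa [inv_mul_cancel₀ h2.ne'] at this
    nlinarith [norm_nonneg (φ b - l)]

theorem aux_step1 {t s : R} (hs : s * t * s = s)
    (hacc : ∀ l : ℂ, l ≠ 0 → ∃ f, SI (t - t ^ 2 * s - l • (1 : R)) f) :
    ∃ (r : ℝ) (f : R), 0 < r ∧ f * f = f ∧ (∀ φ : R →ₐ[ℂ] ℂ, φ f = 1 → ‖φ t‖ < r) ∧
      (∀ φ : R →ₐ[ℂ] ℂ, φ f = 0 → r ≤ ‖φ t‖) ∧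
      ∀ l : ℂ, l ≠ 0 → ∃ g, SI (t * f - l • (1 : R)) g := by
  classical
  set e := t * s with he
  have hei : e * e = e := by rw [he]; linear_combination t * hs
  set b := t - t ^ 2 * s with hb
  have hb0 : ∀ φ : R →ₐ[ℂ] ℂ, φ e = 0 → φ b = φ t := by
    intro φ h
    have : b = t * (1 - e) := by rw [hb, he]; ring
    rw [this]; simp [h]
  have hb1 : ∀ φ : R →ₐ[ℂ] ℂ, φ e = 1 → φ b = 0 := by
    intro φ h
    have : b = t * (1 - e) := by rw [hb, he]; ring
    rw [this]; simp [h]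
  set M := ‖s‖ * ‖(1 : R)‖ + 1 with hM
  have hMpos : 0 < M := by positivity
  have hrpos : 0 < M⁻¹ := inv_pos.2 hMpos
  have ht1 : ∀ φ : R →ₐ[ℂ] ℂ, φ e = 1 → M⁻¹ ≤ ‖φ t‖ := by
    intro φ h
    rw [he, map_mul] at h
    have e' := congrArg norm h
    rw [norm_mul, norm_one] at e'
    have hb := aux_bound φ s
    rw [inv_le_iff_one_le_mul₀ hMpos]
    nlinarith [norm_nonneg (φ t)]
  choose! F hF using hacc
  have hiso : ∀ l : ℂ, l ≠ 0 → ∃ δ > 0, ∀ φ : R →ₐ[ℂ] ℂ, ‖φ b - l‖ < δ → φ b = l :=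
    fun l hl => aux_isolated (hF l hl)
  choose! δ hδ hδ' using hiso
  let K : Set ℂ := Metric.closedBall 0 (‖b‖ * ‖(1 : R)‖) \ Metric.ball 0 M⁻¹
  have hK : IsCompact K := (isCompact_closedBall _ _).diff Metric.isOpen_ball
  have hK0 : ∀ l ∈ K, l ≠ 0 := by
    rintro l ⟨-, hl⟩ rfl
    exact hl (Metric.mem_ball_self hrpos)
  obtain ⟨T, hTK, hT⟩ := hK.elim_nhds_subcover (fun l => Metric.ball l (δ l))
    (fun l hl => Metric.ball_mem_nhds _ (hδ l (hK0 l hl)))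
  have hcover : ∀ φ : R →ₐ[ℂ] ℂ, M⁻¹ ≤ ‖φ b‖ → φ b ∈ T := by
    intro φ h
    have : φ b ∈ K := ⟨by simpa using aux_bound φ b, by simpa using h⟩
    obtain ⟨l, hl, hl'⟩ := Set.mem_iUnion₂.1 (hT this)
    rw [Metric.mem_ball, dist_eq_norm] at hl'
    rw [hδ' l (hK0 l (hTK l hl)) φ hl']
    exact hl
  set Q := ∏ l ∈ T, F l with hQ
  have hQi : Q * Q = Q := by
    rw [hQ, ← Finset.prod_mul_distrib]
    exact Finset.prod_congr rfl fun l hl => (hF l (hK0 l (hTK l hl))).1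
  have hQ0 : ∀ φ : R →ₐ[ℂ] ℂ, φ Q = 0 ↔ φ b ∈ T := by
    intro φ
    rw [hQ, map_prod, Finset.prod_eq_zero_iff]
    constructor
    · rintro ⟨l, hl, h⟩
      have := ((hF l (hK0 l (hTK l hl))).2 φ).2 h
      have : φ b = l := by simp at this; linear_combination this
      rwa [this]
    · intro h
      refine ⟨φ b, h, ((hF _ (hK0 _ (hTK _ h))).2 φ).1 ?_⟩
      simp
  have hfi : ((1 - e) * Q) * ((1 - e) * Q) = (1 - e) * Q := by
    linear_combination (1 - e) ^ 2 * hQi + Q * hei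
  refine ⟨M⁻¹, (1 - e) * Q, hrpos, hfi, ?_, ?_, ?_⟩
  · intro φ h
    rcases aux_idem hei φ with h0 | h1
    · rw [← hb0 φ h0]
      by_contra hcon
      have := (hQ0 φ).2 (hcover φ (not_lt.1 hcon))
      simp [this] at h
    · simp [h1] at h
  · intro φ h
    rcases aux_idem hei φ with h0 | h1
    · have hq : φ Q = 0 := by simpa [h0] using h
      have := (hTK _ ((hQ0 φ).1 hq)).2
      rw [← hb0 φ h0]
      simpa using this
    · exact ht1 φ h1
  · intro l hl
    obtain ⟨hg, hg'⟩ := hF l hl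
    set f := (1 - e) * Q with hf
    refine ⟨F l * f + (1 - f), by linear_combination f ^ 2 * hg + (1 - F l) * hfi, ?_⟩
    intro φ
    rcases aux_idem hfi φ with h0 | h1
    · simp [h0, hl]
    · have he0 : φ e = 0 := by
        rcases aux_idem hei φ with h0 | h1'
        · exact h0
        · simp [hf, h1'] at h1
      have := hg' φ
      simp only [map_sub, hb0 φ he0] at this
      simpa [h1] using this
end comm

section noncomm
universe u
variable {A : Type u} [NormedRing A] [NormedAlgebra ℂ A] [CompleteSpace A]

theorem aux_gelfand [Nontrivial A] {a : A} {r : ℝ} (hr : 0 < r)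
    (h : ∀ w ∈ spectrum ℂ a, ‖w‖ < r) :
    Tendsto (fun k : ℕ => ‖a ^ k‖ / r ^ k) atTop (𝓝 0) := by
  lift r to NNReal using hr.le
  have h1 : spectralRadius ℂ a < r := spectrum.spectralRadius_lt_of_forall_lt a
    (fun z hz => by exact_mod_cast h z hz)
  obtain ⟨t, ht1, ht2⟩ := ENNReal.lt_iff_exists_nnreal_btwn.1 h1
  have ht2' : t < r := by exact_mod_cast ht2
  have h2 := (spectrum.pow_nnnorm_pow_one_div_tendsto_nhds_spectralRadius a).eventually_lt_const ht1
  have h3 : Tendsto (fun k : ℕ => ((t : ℝ) / r) ^ k) atTop (𝓝 0) := by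
    apply tendsto_pow_atTop_nhds_zero_of_lt_one (by positivity)
    rw [div_lt_one hr]
    exact_mod_cast ht2'
  refine squeeze_zero' (Eventually.of_forall fun k => by positivity) ?_ h3
  filter_upwards [h2, eventually_gt_atTop 0] with k hk hk0
  rw [div_pow]
  gcongr
  have hk' : (0:ℝ) < k := by exact_mod_cast hk0
  have h4 : ((‖a ^ k‖₊ : ENNReal) ^ (1 / k : ℝ)) ^ (k : ℝ) ≤ (t : ENNReal) ^ (k : ℝ) :=
    ENNReal.rpow_le_rpow hk.le hk'.le
  rw [← ENNReal.rpow_mul, one_div_mul_cancel hk'.ne', ENNReal.rpow_one, ENNReal.rpow_natCast] at h4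
  exact_mod_cast h4

theorem aux_dc {a e x z : A} {r : ℝ} (hr : 0 < r)
    (hax : a * x = e) (hxa : x * a = e) (hee : e * e = e)
    (hb : ∀ w ∈ spectrum ℂ (a * (1 - e)), ‖w‖ < r) (hx : ∀ w ∈ spectrum ℂ x, ‖w‖ < r⁻¹)
    (hz : z * a = a * z) : z * e = e * z := by
  nontriviality A
  have hcax : Commute a x := hax.trans hxa.symm
  have hcae : Commute a e := by rw [← hax]; exact (Commute.refl a).mul_right hcax
  have hca1 : Commute a (1 - e) := (Commute.one_right a).sub_right hcae
  have hcz : Commute z a := hz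
  have hp1 : ∀ k : ℕ, a ^ (k+1) * x ^ (k+1) = e := fun k => by
    rw [← hcax.mul_pow, hax]; exact IsIdempotentElem.pow_succ_eq k hee
  have hp2 : ∀ k : ℕ, x ^ (k+1) * a ^ (k+1) = e := fun k => by
    rw [← hcax.symm.mul_pow, hxa]; exact IsIdempotentElem.pow_succ_eq k hee
  have hi1 : (1 - e) * (1 - e) = 1 - e := IsIdempotentElem.one_sub hee
  have hp3 : ∀ k : ℕ, (a * (1 - e)) ^ (k+1) = a ^ (k+1) * (1 - e) := fun k => by
    rw [hca1.mul_pow, IsIdempotentElem.pow_succ_eq k hi1]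
  have hg := ((aux_gelfand hr hb).mul (aux_gelfand (inv_pos.2 hr) hx)).const_mul ‖z‖
  rw [mul_zero, mul_zero] at hg
  have hg1 := (tendsto_add_atTop_iff_nat 1).2 hg
  have hgk : ∀ k : ℕ, ‖z‖ * (‖(a * (1 - e)) ^ k‖ / r ^ k * (‖x ^ k‖ / r⁻¹ ^ k))
      = ‖(a * (1 - e)) ^ k‖ * ‖z‖ * ‖x ^ k‖ := fun k => by
    have : r ^ k ≠ 0 := pow_ne_zero _ hr.ne'
    rw [inv_pow]
    field_simp
  have key : ∀ y : A, (∀ k : ℕ, ‖y‖ ≤ ‖(a * (1 - e)) ^ (k+1)‖ * ‖z‖ * ‖x ^ (k+1)‖) → y = 0 := by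
    intro y hy
    have : ‖y‖ ≤ 0 := ge_of_tendsto' hg1 (fun k => by rw [hgk]; exact hy k)
    exact norm_le_zero_iff.1 this
  have h1 : e * z * (1 - e) = 0 := by
    apply key
    intro k
    have : e * z * (1 - e) = x ^ (k+1) * z * (a * (1 - e)) ^ (k+1) := by
      rw [hp3, ← hp2 k, mul_assoc (x ^ (k+1)) z, ← mul_assoc z, (hcz.pow_right (k+1)).eq]
      simp only [mul_assoc]
    rw [this]
    calc _ ≤ ‖x ^ (k+1)‖ * ‖z‖ * ‖(a * (1 - e)) ^ (k+1)‖ := norm_mul₃_le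
      _ = _ := by ring
  have h2 : (1 - e) * z * e = 0 := by
    apply key
    intro k
    have : (1 - e) * z * e = (a * (1 - e)) ^ (k+1) * z * x ^ (k+1) := by
      rw [hp3, (hca1.pow_left (k+1)).eq, mul_assoc (1 - e) (a ^ (k+1)),
        ← (hcz.pow_right (k+1)).eq]
      simp only [mul_assoc]
      rw [hp1]
    rw [this]
    exact norm_mul₃_le
  have h1' : e * z = e * z * e := by
    rw [mul_sub, mul_one, sub_eq_zero] at h1; exact h1
  have h2' : z * e = e * z * e := by
    rw [sub_mul, sub_mul, one_mul, sub_eq_zero] at h2; exact h2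
  rw [h1', h2']

variable {R : Type u} [NormedCommRing R] [NormedAlgebra ℂ R] [CompleteSpace R]

theorem aux_isUnit {ι : R →ₐ[ℂ] A} {s : Set A} (hi : Function.Injective ι)
    (hrange : Set.range ι = Set.centralizer (Set.centralizer s)) (a : R) :
    IsUnit (ι a) ↔ IsUnit a := by
  refine ⟨fun h => ?_, fun h => h.map ι⟩
  obtain ⟨u, hu⟩ := h
  have : (↑u⁻¹ : A) ∈ Set.range ι := by
    rw [hrange]
    intro z hz
    have h1 : ι a ∈ Set.centralizer (Set.centralizer s) := hrange ▸ ⟨a, rfl⟩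
    have h2 : Commute z (u : A) := by rw [hu]; exact h1 z hz
    exact h2.units_inv_right
  obtain ⟨b, hb⟩ := this
  refine IsUnit.of_mul_eq_one b (hi ?_)
  rw [map_mul, hb, ← hu, map_one, Units.mul_inv]

theorem aux_specEq {ι : R →ₐ[ℂ] A} {s : Set A} (hi : Function.Injective ι)
    (hrange : Set.range ι = Set.centralizer (Set.centralizer s)) (a : R) :
    spectrum ℂ (ι a) = spectrum ℂ a := by
  ext z
  rw [spectrum.mem_iff, spectrum.mem_iff, ← AlgHom.commutes ι, ← map_sub,
    aux_isUnit hi hrange]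

theorem aux_mem {ι : R →ₐ[ℂ] A} {s : Set A}
    (hrange : Set.range ι = Set.centralizer (Set.centralizer s)) (a : R) (y : A)
    (h : ∀ z, z * ι a = ι a * z → z * y = y * z) : ∃ b, ι b = y := by
  have : y ∈ Set.range ι := by
    rw [hrange]
    intro z hz
    have h1 : ι a ∈ Set.centralizer (Set.centralizer s) := hrange ▸ ⟨a, rfl⟩
    exact h z (h1 z hz)
  exact this

theorem aux_fwd {ι : R →ₐ[ℂ] A} {s : Set A} (hi : Function.Injective ι)
    (hrange : Set.range ι = Set.centralizer (Set.centralizer s)) {a : R}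
    (h : IsGDrazinInv (ι a)) : ∃ f, SI a f := by
  obtain ⟨x, h1, h2, h3⟩ := h
  have hee : (ι a * x) * (ι a * x) = ι a * x := by
    rw [mul_assoc, ← mul_assoc x, h2]
  have h3' : ι a - ι a ^ 2 * x = ι a * (1 - ι a * x) := by
    rw [mul_sub, mul_one, sq, mul_assoc]
  have hdc : ∀ z, z * ι a = ι a * z → z * (ι a * x) = (ι a * x) * z := by
    intro z hz
    have hM : (0:ℝ) < ‖x‖ * ‖(1 : A)‖ + 1 := by positivity
    refine aux_dc (r := (‖x‖ * ‖(1 : A)‖ + 1)⁻¹) (x := x) (by positivity) rfl h1.symm hee ?_ ?_ hz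
    · intro w hw
      rw [← h3', h3] at hw
      rw [Set.mem_singleton_iff.1 hw, norm_zero]
      positivity
    · intro w hw
      rw [inv_inv]
      exact (spectrum.norm_le_norm_mul_of_mem hw).trans_lt (lt_add_one _)
  obtain ⟨f, hf⟩ := aux_mem hrange a _ hdc
  have hff : f * f = f := hi (by rw [map_mul, hf, hee])
  refine ⟨f, hff, fun φ => ⟨fun h0 => ?_, fun h0 => ?_⟩⟩
  · rcases aux_idem hff φ with h | h
    · exact h
    · exfalso
      have hu : IsUnit (a * f + (1 - f)) := by
        rw [← aux_isUnit hi hrange, isUnit_iff_exists]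
        have q1 : Commute (ι a) x := h1
        have q2 : (ι a * x) * x = x * (ι a * x) := by rw [← mul_assoc, h1]
        have q3 : x * (ι a * x) = x := by rw [← mul_assoc, h2]
        have q4 : ι a * (ι a * x) = (ι a * x) * ι a := by rw [mul_assoc, ← h1]
        simp only [map_add, map_mul, map_sub, map_one, hf]
        generalize hE : ι a * x = E at *
        have hE' : x * ι a = E := h1.symm
        refine ⟨x + (1 - E), ?_, ?_⟩
        · have e1 : ι a * E * x = E := by rw [mul_assoc, q2, q3, hE]
          have e2 : E * x = x := by rw [q2, q3]
          simp only [mul_add, add_mul, mul_sub, sub_mul, mul_one, one_mul, e1, e2, hee,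
            mul_assoc]
          abel
        · have e2 : E * ι a * E = ι a * E := by rw [← q4, mul_assoc, hee]
          simp only [mul_add, add_mul, mul_sub, sub_mul, mul_one, one_mul, hee, q3,
            ← mul_assoc, hE', e2]
          abel
      have := (aux_unit _).1 hu φ
      simp [h, h0] at this
  · have hm : φ (a * (1 - f)) ∈ spectrum ℂ (ι (a * (1 - f))) := by
      rw [aux_specEq hi hrange]; exact AlgHom.apply_mem_spectrum φ _
    rw [map_mul ι, map_sub ι, map_one ι, hf, ← h3', h3] at hm
    simpa [h0] using hm

theorem aux_bwd [Nontrivial A] {ι : R →ₐ[ℂ] A} {s : Set A} (hi : Function.Injective ι)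
    (hrange : Set.range ι = Set.centralizer (Set.centralizer s)) {a f : R}
    (h : SI a f) : IsGDrazinInv (ι a) := by
  obtain ⟨hf, hf'⟩ := h
  obtain ⟨x, hx, hx'⟩ := aux_inv (a := a) hf (fun φ h1 h0 => by
    rw [hf' φ, h1] at h0; exact one_ne_zero h0)
  refine ⟨ι x, ?_, ?_, ?_⟩
  · rw [← map_mul, ← map_mul, mul_comm]
  · rw [← map_mul, ← map_mul]
    congr 1
    linear_combination x * hx + hx'
  · rw [← map_pow, ← map_mul, ← map_sub]
    refine Set.eq_singleton_iff_nonempty_unique_mem.2 ⟨spectrum.nonempty _, ?_⟩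
    intro w hw
    rw [aux_specEq hi hrange, aux_spec] at hw
    obtain ⟨φ, rfl⟩ := hw
    have : a - a ^ 2 * x = a * (1 - f) := by linear_combination -a * hx
    rw [this]
    rcases aux_idem hf φ with h0 | h1
    · simp [(hf' φ).2 h0]
    · simp [h1]

theorem aux_first {T : A} (hT : IsAgDrazinInv T) :
    ∃ E : A, E * E = E ∧ (∀ z, z * T = T * z → z * E = E * z) ∧
      IsUnit (T * (1 - E) + E) ∧ MemAcc (T * E) := by
  obtain ⟨S, h1, h2, h3⟩ := hT
  have hnt : Nontrivial A := by
    by_contra hcon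
    rw [not_nontrivial_iff_subsingleton] at hcon
    obtain ⟨x, -, -, hx⟩ := h3 1 one_ne_zero
    unfold IsQuasinilpotent at hx
    rw [spectrum.of_subsingleton] at hx
    exact (Set.singleton_ne_empty _) hx.symm
  obtain ⟨R, _, _, _, ι, hi, hrange⟩ := aux_model {T, S} (by
    rintro x (rfl | rfl) y (rfl | rfl) <;> simp [h1])
  have hsub := Set.subset_centralizer_centralizer (S := ({T, S} : Set A))
  rw [← hrange] at hsub
  obtain ⟨t, rfl⟩ := hsub (show T ∈ _ by simp)
  obtain ⟨s, rfl⟩ := hsub (show S ∈ _ by simp)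
  have hs : s * t * s = s := hi (by simpa using h2)
  obtain ⟨r, f, hr, hff, hf1, hf0, hacc⟩ := aux_step1 hs (fun l hl => by
    have := h3 l hl
    apply aux_fwd hi hrange
    simpa using this)
  have hff' : (1 - f) * (1 - f) = 1 - f := by linear_combination hff
  have hnz : ∀ φ : R →ₐ[ℂ] ℂ, φ f = 0 → φ t ≠ 0 := fun φ h h0 => by
    have := hf0 φ h
    rw [h0, norm_zero] at this
    linarith
  obtain ⟨x, hx, hx'⟩ := aux_inv (a := t) hff' (fun φ h => hnz φ (by
    simpa using h))
  refine ⟨ι f, by rw [← map_mul, hff], ?_, ?_, ?_⟩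
  · intro z hz
    -- strictness
    obtain ⟨ρ, hρ, hρr, hρ'⟩ : ∃ ρ : ℝ, 0 < ρ ∧ ρ < r ∧ ∀ w ∈ spectrum ℂ (ι (t * f)), ‖w‖ < ρ := by
      obtain ⟨w0, hw0, hmax⟩ := (spectrum.isCompact (𝕜 := ℂ) (ι (t * f))).exists_isMaxOn
        (spectrum.nonempty _) continuous_norm.continuousOn
      have hw0r : ‖w0‖ < r := by
        rw [aux_specEq hi hrange, aux_spec] at hw0
        obtain ⟨φ, rfl⟩ := hw0
        rcases aux_idem hff φ with h | h
        · simpa [h] using hr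
        · simpa [h] using hf1 φ h
      obtain ⟨ρ, h1, h2⟩ := exists_between hw0r
      exact ⟨ρ, (norm_nonneg _).trans_lt h1, h2, fun w hw => lt_of_le_of_lt (hmax hw) h1⟩
    have := aux_dc (a := ι t) (e := ι (1 - f)) (x := ι x) (z := z) hρ
      (by rw [← map_mul, hx]) (by rw [← map_mul, mul_comm, hx]) (by rw [← map_mul, hff'])
      (by
        have e : ι t * (1 - ι (1 - f)) = ι (t * f) := by simp
        rw [e]; exact hρ')
      (by
        intro w hw
        rw [aux_specEq hi hrange, aux_spec] at hw
        obtain ⟨φ, rfl⟩ := hw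
        rcases aux_idem hff φ with h | h
        · have e := congrArg φ hx
          rw [map_mul, map_sub, map_one, h, sub_zero] at e
          have e' := congrArg norm e
          rw [norm_mul, norm_one] at e'
          have hle := hf0 φ h
          have : ‖φ x‖ = ‖φ t‖⁻¹ := eq_inv_of_mul_eq_one_right e'
          rw [this]
          exact inv_strictAnti₀ hρ (hρr.trans_le hle)
        · have e := congrArg φ hx'
          rw [map_mul, map_sub, map_one, h, sub_self, mul_zero] at e
          rw [← e, norm_zero]
          exact inv_pos.2 hρ) hz
    rw [map_sub, map_one, mul_sub, sub_mul, mul_one, one_mul] at this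
    exact sub_right_injective this
  · have : ι t * (1 - ι f) + ι f = ι (t * (1 - f) + f) := by simp
    rw [this, aux_isUnit hi hrange, aux_unit]
    intro φ
    rcases aux_idem hff φ with h | h
    · simpa [h] using hnz φ h
    · simp [h]
  · intro l hl
    obtain ⟨g, hg⟩ := hacc l hl
    have := aux_bwd hi hrange hg
    simpa using this
end noncomm

theorem aux_finrank {X : Type*} [NormedAddCommGroup X] [NormedSpace ℂ X] (B : X →L[ℂ] X)
    (h : FiniteDimensional ℂ (LinearMap.range (B : X →ₗ[ℂ] X))) (W : X →L[ℂ] X) :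
    IsIntegral ℂ (B * W) := by
  set V := LinearMap.range (B : X →ₗ[ℂ] X) with hV
  have hm : ∀ x, B (W x) ∈ V := fun x => ⟨W x, rfl⟩
  let g : Module.End ℂ V := LinearMap.restrict ((B * W : X →L[ℂ] X) : X →ₗ[ℂ] X)
    (fun x _ => hm x)
  obtain ⟨p, hp, hpg⟩ := Algebra.IsIntegral.isIntegral (R := ℂ) g
  have hpg' : Polynomial.aeval g p = 0 := hpg
  have key : ∀ (q : Polynomial ℂ) (v : V),
      (Polynomial.aeval (B * W) q) (v : X) = ((Polynomial.aeval g q) v : X) := by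
    intro q
    induction q using Polynomial.induction_on' with
    | add p q hp hq => intro v; simp [hp, hq]
    | monomial n c =>
      intro v
      simp only [Polynomial.aeval_monomial, Algebra.algebraMap_eq_smul_one, smul_mul_assoc, one_mul]
      have : ∀ (n : ℕ) (v : V), ((B * W) ^ n) (v : X) = ((g ^ n) v : X) := by
        intro n
        induction n with
        | zero => intro v; simp
        | succ n ih =>
          intro v
          rw [pow_succ, pow_succ]
          exact ih (g v)
      simp [this]
  refine ⟨p * Polynomial.X, hp.mul Polynomial.monic_X, ?_⟩
  change Polynomial.aeval (B * W) (p * Polynomial.X) = 0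
  ext x
  rw [map_mul, Polynomial.aeval_X]
  have := key p ⟨B (W x), hm x⟩
  rw [hpg'] at this
  simpa using this

theorem agDrazin_add_power_finiteRank {X : Type*} [NormedAddCommGroup X] [NormedSpace ℂ X]
    [CompleteSpace X] (T F : X →L[ℂ] X)
    (hT : IsAgDrazinInv T)
    (hF : ∃ n : ℕ, 0 < n ∧ FiniteDimensional ℂ (LinearMap.range ((F ^ n : X →L[ℂ] X) : X →ₗ[ℂ] X)))
    (hcomm : T * F = F * T) :
    IsAgDrazinInv (T + F) := by
  obtain ⟨n, hn, hfin⟩ := hF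
  have hint := aux_finrank (F ^ n) hfin
  obtain ⟨E, hE, hEc, hEu, hacc⟩ := aux_first hT
  have hnt : Nontrivial (X →L[ℂ] X) := by
    by_contra hcon
    rw [not_nontrivial_iff_subsingleton] at hcon
    obtain ⟨x, -, -, hx⟩ := hacc 1 one_ne_zero
    unfold IsQuasinilpotent at hx
    rw [spectrum.of_subsingleton] at hx
    exact (Set.singleton_ne_empty _) hx.symm
  have hTE : T * E = E * T := hEc T rfl
  have hFE : F * E = E * F := hEc F hcomm.symm
  obtain ⟨R, _, _, _, ι, hi, hrange⟩ := aux_model {T, F, E} (by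
    rintro x (rfl | rfl | rfl) y (rfl | rfl | rfl) <;> simp [hcomm, hTE, hFE])
  have hsub := Set.subset_centralizer_centralizer (S := ({T, F, E} : Set (X →L[ℂ] X)))
  rw [← hrange] at hsub
  obtain ⟨t, rfl⟩ := hsub (show T ∈ _ by simp)
  obtain ⟨F, rfl⟩ := hsub (show F ∈ _ by simp)
  obtain ⟨f, rfl⟩ := hsub (show E ∈ _ by simp)
  have hint' : ∀ w : R, IsIntegral ℂ (F ^ n * w) := fun w => by
    rw [← isIntegral_algHom_iff ι hi, map_mul, map_pow]
    exact hint _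
  have hFint : IsIntegral ℂ F := by
    have := hint' 1
    rw [mul_one] at this
    exact this.of_pow hn
  obtain ⟨P, c, hP, hPc⟩ := aux_int hFint n hn
  have hff : f * f = f := hi (by simpa using hE)
  have hff' : (1 - f) * (1 - f) = 1 - f := by linear_combination hff
  have hu : IsUnit (t * (1 - f) + f) := by
    rw [← aux_isUnit hi hrange]
    simpa using hEu
  obtain ⟨e, he, het, heacc⟩ := aux_step2 (t := t) (F := F) (P := P) hff' (by
      intro φ h
      have := (aux_unit _).1 hu φ
      have h0 : φ f = 0 := by simpa using h
      simpa [h0] using this)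
    (by
      intro l hl
      apply aux_fwd hi hrange
      have := hacc l hl
      simpa using this) hP
    (by
      intro l hl
      have h1 : IsIntegral ℂ ((t + F) * P - l • (1 : R)) := by
        apply IsIntegral.sub
        · have : (t + F) * P = F ^ n * (c * (t + F)) := by rw [hPc]; ring
          rw [this]
          exact hint' _
        · rw [← Algebra.algebraMap_eq_smul_one]
          exact isIntegral_algebraMap
      obtain ⟨g, -, hg, -⟩ := aux_int h1 1 one_pos
      exact ⟨g, hg⟩)
  obtain ⟨x, hx, hx'⟩ := aux_inv (a := t + F) he het
  rw [← map_add]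
  refine ⟨ι x, ?_, ?_, ?_⟩
  · rw [← map_mul, ← map_mul, mul_comm]
  · rw [← map_mul, ← map_mul]
    congr 1
    linear_combination x * hx + hx'
  · intro l hl
    obtain ⟨g, hg⟩ := heacc l hl
    have h1 := aux_bwd hi hrange hg
    have h2 : (t + F) * (1 - e) = (t + F) - (t + F) ^ 2 * x := by
      linear_combination (t + F) * hx
    rw [h2] at h1
    simpa only [map_sub, map_mul, map_pow, map_smul, map_one] using h1
end
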